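/- For Lebesgue-almost every real number d, the following holds: for every compact set K contained in the open strip D := {s ∈ ℂ : 1/2 < Re(s) < 1} with connected complement in ℂ and every ε > 0, one has liminf_{T→∞} (1/T)·μ{τ ∈ [0,T] : sup_{s∈K} |ζ(s+idτ) − ζ(s+iτ)| < ε} > 0. -/

import Mathlib

open MeasureTheory Filter Complex
open scoped ENNReal

/-- The open strip `D = {s : 1/2 < Re s < 1}`. -/
def strip : Set ℂ := {s : ℂ | 1/2 < s.re ∧ s.re < 1}

/-- Lower density of a set of real numbers:
`liminf_{T→∞} (1/T)·μ(S ∩ [0,T])`. -/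
noncomputable def lowerDens (S : Set ℝ) : ℝ :=
  liminf (fun T : ℝ => (volume (S ∩ Set.Icc 0 T)).toReal / T) atTop

/-- `sup_{s ∈ K} |f s|`, valued in `ℝ≥0∞`. -/
noncomputable def supNorm (K : Set ℂ) (f : ℂ → ℂ) : ℝ≥0∞ :=
  ⨆ s ∈ K, (‖f s‖₊ : ℝ≥0∞)

/-!
Restricted to a compact `K ⊆ strip`, the translates `F τ = ζ(· + iτ)` form a Besicovitch almost
periodic curve in `C(K, ℂ)`: in mean over `τ ∈ [0, T]`, they are approximated by the partial sums
of the Dirichlet series, whose frequencies lie in the countable group `Λ` of logarithms of positive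
rationals. For the approximation, `(ζ(s) - ∑_{n ≤ N} n⁻ˢ) / s` is the Mellin transform of the
discrepancy between the number of integers in `(N, y]` and `y`; Plancherel for the increment of
this discrepancy under a dilation by `exp (1 / (2 (T + 1)))` bounds the mean square up to height
`T`, and subharmonicity of `|f|` passes from vertical lines to the supremum over `K`.

By total boundedness of the range of a trigonometric polynomial, some small tent function
`φ` satisfies `mean (φ ∘ F) = a ≠ 0`. If `l + d * m = 0` with `l, m ∈ Λ` forces `m = 0`, which
excludes only the countably many quotients `-l / m`, then no frequency of `F (d * τ)` other than
`0` interacts with one of `F τ`, so `φ (F τ) * φ (F (d * τ))` has mean `a² ≠ 0`. Where this product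
does not vanish, `F τ` and `F (d * τ)` are both close to the center of the tent.
-/

open scoped Topology

section MeanValue

variable {E : Type*} [NormedAddCommGroup E] [NormedSpace ℝ E] {f g : ℝ → E} {a b : E}

/-- The continuous function `f` has mean value `a = lim_{T→∞} T⁻¹ ∫₀ᵀ f`. -/
structure HasMeanValue (f : ℝ → E) (a : E) : Prop where
  continuous : Continuous f
  tendsto : Tendsto (fun T : ℝ => T⁻¹ • ∫ τ in 0..T, f τ) atTop (𝓝 a)

namespace HasMeanValue

lemma unique (hf : HasMeanValue f a) (hf' : HasMeanValue f b) : a = b :=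
  tendsto_nhds_unique hf.tendsto hf'.tendsto

lemma congr_fun (hf : HasMeanValue f a) (h : ∀ τ, f τ = g τ) : HasMeanValue g a :=
  funext h ▸ hf

lemma add (hf : HasMeanValue f a) (hg : HasMeanValue g b) : HasMeanValue (f + g) (a + b) where
  continuous := hf.continuous.add hg.continuous
  tendsto := (hf.tendsto.add hg.tendsto).congr fun T => by
    simp only [Pi.add_apply, intervalIntegral.integral_add (hf.continuous.intervalIntegrable _ _)
      (hg.continuous.intervalIntegrable _ _), smul_add]

lemma zero : HasMeanValue (0 : ℝ → E) 0 where
  continuous := continuous_zero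
  tendsto := by simp

lemma sum {ι : Type*} (s : Finset ι) {f : ι → ℝ → E} {a : ι → E}
    (h : ∀ i ∈ s, HasMeanValue (f i) (a i)) : HasMeanValue (∑ i ∈ s, f i) (∑ i ∈ s, a i) := by
  classical
  induction s using Finset.induction with
  | empty => simpa using zero
  | insert i s hi ih =>
    rw [Finset.sum_insert hi, Finset.sum_insert hi]
    exact (h i (by simp)).add (ih fun j hj => h j (by simp [hj]))

lemma const_smul {f : ℝ → ℂ} {a : ℂ} (c : ℂ) (hf : HasMeanValue f a) :
    HasMeanValue (c • f) (c • a) where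
  continuous := hf.continuous.const_smul c
  tendsto := (hf.tendsto.const_smul c).congr fun T => by
    simp only [Pi.smul_apply, intervalIntegral.integral_smul, smul_comm c]

lemma cexp_zero : HasMeanValue (fun τ : ℝ => cexp (I * (0 : ℝ) * τ)) 1 where
  continuous := by fun_prop
  tendsto := tendsto_const_nhds.congr' <| by
    filter_upwards [eventually_gt_atTop 0] with T hT
    have : (T : ℂ) ≠ 0 := by exact_mod_cast hT.ne'
    simp [this]

lemma cexp_of_ne_zero {l : ℝ} (hl : l ≠ 0) :
    HasMeanValue (fun τ : ℝ => cexp (I * l * τ)) 0 where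
  continuous := by fun_prop
  tendsto := by
    have hIl : (I * l : ℂ) ≠ 0 := by simp [hl]
    have h0 : Tendsto (fun T : ℝ => T⁻¹ * (2 / |l|)) atTop (𝓝 0) := by
      simpa using tendsto_inv_atTop_zero.mul_const (2 / |l|)
    refine squeeze_zero_norm' ?_ h0
    filter_upwards [eventually_gt_atTop 0] with T hT
    have hnorm (x : ℝ) : ‖cexp (I * l * x)‖ = 1 := by
      rw [show I * l * x = ((l * x : ℝ) : ℂ) * I by push_cast; ring]
      exact norm_exp_ofReal_mul_I _
    have htwo : ‖cexp (I * l * T) - cexp (I * l * (0 : ℝ))‖ ≤ 2 := by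
      refine (norm_sub_le _ _).trans ?_
      rw [hnorm, hnorm]
      norm_num
    rw [integral_exp_mul_complex hIl, norm_smul, norm_div, norm_inv, Real.norm_of_nonneg hT.le,
      norm_mul, norm_I, one_mul, norm_real, Real.norm_eq_abs]
    gcongr

end HasMeanValue

lemma eventually_norm_average_sub_le (hf : Continuous f) (hg : Continuous g) {δ : ℝ}
    (h : ∀ᶠ T : ℝ in atTop, ∫ τ in 0..T, ‖f τ - g τ‖ ≤ δ * T) :
    ∀ᶠ T : ℝ in atTop, ‖(T⁻¹ • ∫ τ in 0..T, f τ) - T⁻¹ • ∫ τ in 0..T, g τ‖ ≤ δ := by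
  filter_upwards [h, eventually_gt_atTop 0] with T hT hT0
  rw [← smul_sub, ← intervalIntegral.integral_sub (hf.intervalIntegrable _ _)
    (hg.intervalIntegrable _ _), norm_smul, norm_inv, Real.norm_of_nonneg hT0.le,
    inv_mul_le_iff₀ hT0, mul_comm T]
  exact (intervalIntegral.norm_integral_le_integral_norm hT0.le).trans hT

namespace HasMeanValue

lemma norm_sub_le (hf : HasMeanValue f a) (hg : HasMeanValue g b) {δ : ℝ}
    (h : ∀ᶠ T : ℝ in atTop, ∫ τ in 0..T, ‖f τ - g τ‖ ≤ δ * T) : ‖a - b‖ ≤ δ :=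
  le_of_tendsto (hf.tendsto.sub hg.tendsto).norm
    (eventually_norm_average_sub_le hf.continuous hg.continuous h)

lemma exists_of_approx [CompleteSpace E] (hf : Continuous f)
    (h : ∀ δ > 0, ∃ g b, HasMeanValue g b ∧ ∀ᶠ T : ℝ in atTop, ∫ τ in 0..T, ‖f τ - g τ‖ ≤ δ * T) :
    ∃ a, HasMeanValue f a := by
  suffices Cauchy (map (fun T : ℝ => T⁻¹ • ∫ τ in 0..T, f τ) atTop) by
    obtain ⟨a, ha⟩ := cauchy_map_iff_exists_tendsto.mp this
    exact ⟨a, hf, ha⟩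
  refine Metric.cauchy_iff.mpr ⟨inferInstance, fun ε hε => ?_⟩
  obtain ⟨g, b, hgb, hfg⟩ := h (ε / 4) (by positivity)
  refine ⟨Metric.ball b (ε / 2), ?_, fun x hx y hy => ?_⟩
  · rw [mem_map]
    filter_upwards [eventually_norm_average_sub_le hf hgb.continuous hfg,
      Metric.tendsto_nhds.mp hgb.tendsto (ε / 4) (by positivity)] with T hT hTb
    rw [← dist_eq_norm] at hT
    have := dist_triangle (T⁻¹ • ∫ τ in 0..T, f τ) (T⁻¹ • ∫ τ in 0..T, g τ) b
    exact Metric.mem_ball.mpr (by linarith)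
  · linarith [dist_triangle_right x y b, Metric.mem_ball.mp hx, Metric.mem_ball.mp hy]

lemma of_approx [CompleteSpace E] (hf : Continuous f) (C : ℝ)
    (h : ∀ δ > 0, ∃ g b, HasMeanValue g b ∧ ‖b - a‖ ≤ C * δ ∧
      ∀ᶠ T : ℝ in atTop, ∫ τ in 0..T, ‖f τ - g τ‖ ≤ C * δ * T) : HasMeanValue f a := by
  have hC (ε : ℝ) (hε : 0 < ε) : C * (ε / (|C| + 1)) ≤ ε := by
    rw [← mul_div_assoc, div_le_iff₀ (by positivity)]
    nlinarith [le_abs_self C]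
  obtain ⟨a', ha'⟩ := exists_of_approx hf fun δ hδ => by
    obtain ⟨g, b, hgb, -, hfg⟩ := h (δ / (|C| + 1)) (by positivity)
    refine ⟨g, b, hgb, ?_⟩
    filter_upwards [hfg, eventually_ge_atTop 0] with T hT hT0
    exact hT.trans (by gcongr; exact hC δ hδ)
  suffices ‖a' - a‖ ≤ 0 by rwa [sub_eq_zero.mp (norm_le_zero_iff.mp this)] at ha'
  refine le_of_forall_pos_le_add fun ε hε => ?_
  obtain ⟨g, b, hgb, hba, hfg⟩ := h (ε / 2 / (|C| + 1)) (by positivity)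
  have hC' := hC (ε / 2) (by positivity)
  linarith [norm_sub_le_norm_sub_add_norm_sub a' b a, ha'.norm_sub_le hgb hfg]

end HasMeanValue

lemma lowerDens_pos {S : Set ℝ} {c : ℝ} (hc : 0 < c)
    (h : ∀ᶠ T : ℝ in atTop, c * T ≤ (volume (S ∩ Set.Icc 0 T)).toReal) : 0 < lowerDens S := by
  refine hc.trans_le (le_liminf_of_le (IsBoundedUnder.isCoboundedUnder_ge ⟨1, ?_⟩) ?_)
  · rw [eventually_map]
    filter_upwards [eventually_gt_atTop 0] with T hT
    rw [div_le_one hT]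
    refine ENNReal.toReal_le_of_le_ofReal hT.le ((measure_mono Set.inter_subset_right).trans ?_)
    rw [Real.volume_Icc, sub_zero]
  · filter_upwards [h, eventually_gt_atTop 0] with T hT hT0
    rwa [le_div_iff₀ hT0]

lemma HasMeanValue.lowerDens_pos {w : ℝ → E} {b : E} {S : Set ℝ} (hw : HasMeanValue w b)
    (hb : b ≠ 0) (hle : ∀ τ, ‖w τ‖ ≤ 1) (hS : ∀ τ, w τ ≠ 0 → τ ∈ S) : 0 < lowerDens S := by
  refine _root_.lowerDens_pos (half_pos (norm_pos_iff.mpr hb)) ?_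
  have hev := hw.tendsto.norm.eventually (lt_mem_nhds (half_lt_self (norm_pos_iff.mpr hb)))
  filter_upwards [hev, eventually_gt_atTop 0] with T hT hT0
  rw [norm_smul, norm_inv, Real.norm_of_nonneg hT0.le, lt_inv_mul_iff₀ hT0, mul_comm] at hT
  have hmeas : MeasurableSet {τ | w τ ≠ 0} :=
    (isOpen_ne_fun hw.continuous continuous_const).measurableSet
  have hfin (A : Set ℝ) : volume (A ∩ Set.Icc 0 T) ≠ ∞ :=
    ((measure_mono Set.inter_subset_right).trans_lt measure_Icc_lt_top).ne
  calc ‖b‖ / 2 * T ≤ ‖∫ τ in 0..T, w τ‖ := hT.le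
    _ ≤ ∫ τ in 0..T, ‖w τ‖ := intervalIntegral.norm_integral_le_integral_norm hT0.le
    _ = ∫ τ in Set.Icc 0 T, ‖w τ‖ := by
      rw [intervalIntegral.integral_of_le hT0.le, integral_Icc_eq_integral_Ioc]
    _ ≤ ∫ τ in Set.Icc 0 T, {τ | w τ ≠ 0}.indicator 1 τ := by
      refine setIntegral_mono hw.continuous.norm.integrableOn_Icc
        (Integrable.indicator (integrableOn_const measure_Icc_lt_top.ne) hmeas) fun τ => ?_
      by_cases h : w τ = 0
      · simp [h]
      · simpa [h] using hle τ
    _ = (volume ({τ | w τ ≠ 0} ∩ Set.Icc 0 T)).toReal := by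
      rw [integral_indicator_one hmeas, measureReal_restrict_apply hmeas, measureReal_def]
    _ ≤ (volume (S ∩ Set.Icc 0 T)).toReal :=
      ENNReal.toReal_mono (hfin S) (measure_mono (Set.inter_subset_inter_left _ hS))

end MeanValue

section TrigPoly

variable {X : Type*} [NormedAddCommGroup X] [NormedSpace ℂ X] {Λ : AddSubgroup ℝ}

/-- The `X`-valued trigonometric polynomials with frequencies in `Λ`. -/
def trigPoly (Λ : AddSubgroup ℝ) (X : Type*) [NormedAddCommGroup X] [NormedSpace ℂ X] :
    Submodule ℂ (ℝ → X) :=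
  Submodule.span ℂ {P | ∃ l ∈ Λ, ∃ v : X, P = fun τ : ℝ => cexp (I * l * τ) • v}

/-- The linear flow on the torus with frequencies `l`, normalized so that the characters of the
torus restrict along it to `τ ↦ exp (i (∑ nᵢ lᵢ) τ)`. -/
noncomputable def torusFlow {ι : Type*} (l : ι → ℝ) (τ : ℝ) : UnitAddTorus ι :=
  fun i => ((l i * τ / (2 * Real.pi) : ℝ) : UnitAddCircle)

lemma cexp_smul_mem_trigPoly {l : ℝ} (hl : l ∈ Λ) (v : X) :
    (fun τ : ℝ => cexp (I * l * τ) • v) ∈ trigPoly Λ X :=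
  Submodule.subset_span ⟨l, hl, v, rfl⟩

lemma fourier_torusFlow {ι : Type*} (l : ι → ℝ) (n : ℤ) (τ : ℝ) (i : ι) :
    fourier n (torusFlow l τ i) = cexp (I * (n * l i : ℝ) * τ) := by
  have : (Real.pi : ℂ) ≠ 0 := by exact_mod_cast Real.pi_ne_zero
  rw [torusFlow, fourier_coe_apply]
  congr 1
  push_cast
  field_simp

lemma mFourier_torusFlow {ι : Type*} [Fintype ι] (l : ι → ℝ) (n : ι → ℤ) (τ : ℝ) :
    UnitAddTorus.mFourier n (torusFlow l τ) = cexp (I * (∑ i, n i * l i : ℝ) * τ) := by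
  rw [UnitAddTorus.mFourier, ContinuousMap.coe_mk]
  simp_rw [fourier_torusFlow]
  rw [← Complex.exp_sum]
  push_cast
  rw [Finset.mul_sum, Finset.sum_mul]

lemma exists_eq_comp_torusFlow {P : ℝ → X} (hP : P ∈ trigPoly Λ X) :
    ∃ (m : ℕ) (l : Fin m → ℝ) (S : C(UnitAddTorus (Fin m), X)),
      (∀ i, l i ∈ Λ) ∧ ∀ τ, P τ = S (torusFlow l τ) := by
  obtain ⟨m, c, p, rfl⟩ := Submodule.mem_span_set'.mp hP
  choose l hl v hv using fun i => (p i).2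
  refine ⟨m, l, ⟨fun z => ∑ i, c i • fourier 1 (z i) • v i, by fun_prop⟩, hl, fun τ => ?_⟩
  simp only [Finset.sum_apply, Pi.smul_apply, hv, ContinuousMap.coe_mk, fourier_torusFlow,
    Int.cast_one, one_mul]

lemma totallyBounded_range_of_mem_trigPoly {P : ℝ → X} (hP : P ∈ trigPoly Λ X) :
    TotallyBounded (Set.range P) := by
  obtain ⟨m, l, S, -, hPS⟩ := exists_eq_comp_torusFlow hP
  refine (isCompact_range S.continuous).totallyBounded.subset ?_
  rintro _ ⟨τ, rfl⟩
  exact ⟨_, (hPS τ).symm⟩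

lemma exists_norm_le_of_mem_trigPoly {P : ℝ → X} (hP : P ∈ trigPoly Λ X) :
    ∃ B, ∀ τ, ‖P τ‖ ≤ B := by
  obtain ⟨B, hB⟩ := (totallyBounded_range_of_mem_trigPoly hP).isBounded.exists_norm_le
  exact ⟨B, fun τ => hB _ (Set.mem_range_self τ)⟩

lemma continuous_of_mem_trigPoly {P : ℝ → X} (hP : P ∈ trigPoly Λ X) : Continuous P := by
  induction hP using Submodule.span_induction with
  | mem P hP =>
    obtain ⟨l, -, v, rfl⟩ := hP
    fun_prop
  | zero => exact continuous_zero
  | add P Q _ _ hP hQ => exact hP.add hQ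
  | smul c P _ hP => exact hP.const_smul c

-- Stone–Weierstrass on the torus.
lemma exists_trigPoly_norm_comp_sub_le {P : ℝ → X} (hP : P ∈ trigPoly Λ X) {ψ : X → ℂ}
    (hψ : Continuous ψ) {ε : ℝ} (hε : 0 < ε) :
    ∃ Q ∈ trigPoly Λ ℂ, ∀ τ, ‖ψ (P τ) - Q τ‖ ≤ ε := by
  obtain ⟨m, l, S, hl, hPS⟩ := exists_eq_comp_torusFlow hP
  let φ : C(UnitAddTorus (Fin m), ℂ) := ⟨ψ ∘ S, hψ.comp S.continuous⟩
  have hφ : φ ∈ (Submodule.span ℂ (Set.range UnitAddTorus.mFourier)).topologicalClosure := by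
    rw [UnitAddTorus.span_mFourier_closure_eq_top]
    trivial
  obtain ⟨R, hR, hφR⟩ := Metric.mem_closure_iff.mp hφ ε hε
  refine ⟨fun τ => R (torusFlow l τ), ?_, fun τ => ?_⟩
  · clear hφR
    induction hR using Submodule.span_induction with
    | mem R hR =>
      obtain ⟨n, rfl⟩ := hR
      have hmem : ∑ i, n i * l i ∈ Λ :=
        sum_mem fun i _ => by simpa using Λ.zsmul_mem (hl i) (n i)
      simpa only [mFourier_torusFlow, smul_eq_mul, mul_one] using
        cexp_smul_mem_trigPoly hmem (1 : ℂ)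
    | zero => exact zero_mem _
    | add R R' _ _ hR hR' => exact add_mem hR hR'
    | smul c R _ hR => exact (trigPoly Λ ℂ).smul_mem c hR
  · rw [hPS, ← dist_eq_norm]
    exact (ContinuousMap.dist_apply_le_dist _).trans hφR.le

lemma exists_hasMeanValue_cexp (l : ℝ) :
    ∃ a, HasMeanValue (fun τ : ℝ => cexp (I * l * τ)) a := by
  rcases eq_or_ne l 0 with rfl | hl
  exacts [⟨1, .cexp_zero⟩, ⟨0, .cexp_of_ne_zero hl⟩]

lemma exists_hasMeanValue_of_mem_trigPoly {p : ℝ → ℂ} (hp : p ∈ trigPoly Λ ℂ) :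
    ∃ a, HasMeanValue p a := by
  induction hp using Submodule.span_induction with
  | mem p hp =>
    obtain ⟨l, -, v, rfl⟩ := hp
    obtain ⟨a, ha⟩ := exists_hasMeanValue_cexp l
    exact ⟨v • a, by simpa [mul_comm] using! ha.const_smul v⟩
  | zero => exact ⟨0, .zero⟩
  | add p q _ _ hp hq => exact ⟨_, hp.choose_spec.add hq.choose_spec⟩
  | smul c p _ hp => exact ⟨_, hp.choose_spec.const_smul c⟩

lemma hasMeanValue_cexp_mul_cexp_dilate {d l m : ℝ} (h : l + d * m = 0 → m = 0) {a b : ℂ}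
    (ha : HasMeanValue (fun τ : ℝ => cexp (I * l * τ)) a)
    (hb : HasMeanValue (fun τ : ℝ => cexp (I * m * τ)) b) :
    HasMeanValue (fun τ : ℝ => cexp (I * l * τ) * cexp (I * m * (d * τ : ℝ))) (a * b) := by
  have hmul : (fun τ : ℝ => cexp (I * l * τ) * cexp (I * m * (d * τ : ℝ))) =
      fun τ : ℝ => cexp (I * (l + d * m : ℝ) * τ) := by
    ext τ
    rw [← Complex.exp_add]
    congr 1
    push_cast
    ring
  rw [hmul]
  rcases eq_or_ne m 0 with rfl | hm
  · rw [hb.unique .cexp_zero]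
    simpa using ha
  · rw [hb.unique (.cexp_of_ne_zero hm), mul_zero]
    exact .cexp_of_ne_zero (mt h hm)

lemma hasMeanValue_cexp_smul_mul_cexp_smul_dilate {d l m : ℝ} (h : l + d * m = 0 → m = 0)
    (v w : ℂ) {a b : ℂ} (ha : HasMeanValue (fun τ : ℝ => cexp (I * l * τ) • v) a)
    (hb : HasMeanValue (fun τ : ℝ => cexp (I * m * τ) • w) b) :
    HasMeanValue (fun τ : ℝ => cexp (I * l * τ) • v * cexp (I * m * (d * τ : ℝ)) • w)
      (a * b) := by
  obtain ⟨a', ha'⟩ := exists_hasMeanValue_cexp l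
  obtain ⟨b', hb'⟩ := exists_hasMeanValue_cexp m
  have hva : HasMeanValue (fun τ : ℝ => cexp (I * l * τ) • v) (v * a') := by
    simpa [mul_comm] using! ha'.const_smul v
  have hwb : HasMeanValue (fun τ : ℝ => cexp (I * m * τ) • w) (w * b') := by
    simpa [mul_comm] using! hb'.const_smul w
  rw [ha.unique hva, hb.unique hwb, mul_mul_mul_comm]
  refine ((hasMeanValue_cexp_mul_cexp_dilate h ha' hb').const_smul
    (v * w)).congr_fun fun τ => ?_
  simp only [Pi.smul_apply, smul_eq_mul]
  ring

-- By the hypothesis on `d`, only the constant terms of `p` and `q` contribute.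
lemma hasMeanValue_mul_dilate_of_mem_trigPoly {d : ℝ}
    (hd : ∀ l ∈ Λ, ∀ m ∈ Λ, l + d * m = 0 → m = 0) {p q : ℝ → ℂ} (hp : p ∈ trigPoly Λ ℂ)
    (hq : q ∈ trigPoly Λ ℂ) {a b : ℂ} (ha : HasMeanValue p a) (hb : HasMeanValue q b) :
    HasMeanValue (fun τ => p τ * q (d * τ)) (a * b) := by
  induction hp, hq using Submodule.span_induction₂ generalizing a b with
  | mem_mem p q hp hq =>
    obtain ⟨l, hl, v, rfl⟩ := hp
    obtain ⟨m, hm, w, rfl⟩ := hq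
    exact hasMeanValue_cexp_smul_mul_cexp_smul_dilate (hd l hl m hm) v w ha hb
  | zero_left q _ =>
    rw [ha.unique .zero, zero_mul]
    simpa using! HasMeanValue.zero (E := ℂ)
  | zero_right p _ =>
    rw [hb.unique .zero, mul_zero]
    simpa using! HasMeanValue.zero (E := ℂ)
  | add_left p p' q hp hp' _ ih ih' =>
    obtain ⟨c, hc⟩ := exists_hasMeanValue_of_mem_trigPoly hp
    obtain ⟨c', hc'⟩ := exists_hasMeanValue_of_mem_trigPoly hp'
    rw [ha.unique (hc.add hc'), add_mul]
    simpa [add_mul] using! (ih hc hb).add (ih' hc' hb)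
  | add_right p q q' _ hq hq' ih ih' =>
    obtain ⟨c, hc⟩ := exists_hasMeanValue_of_mem_trigPoly hq
    obtain ⟨c', hc'⟩ := exists_hasMeanValue_of_mem_trigPoly hq'
    rw [hb.unique (hc.add hc'), mul_add]
    simpa [mul_add] using! (ih ha hc).add (ih' ha hc')
  | smul_left c p q hp _ ih =>
    obtain ⟨c', hc'⟩ := exists_hasMeanValue_of_mem_trigPoly hp
    rw [ha.unique (hc'.const_smul c), smul_mul_assoc]
    simpa [mul_assoc] using! (ih hc' hb).const_smul c
  | smul_right c p q _ hq ih =>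
    obtain ⟨c', hc'⟩ := exists_hasMeanValue_of_mem_trigPoly hq
    rw [hb.unique (hc'.const_smul c), mul_smul_comm]
    simpa [mul_left_comm] using! (ih ha hc').const_smul c

end TrigPoly

section Tent

variable {X : Type*} [NormedAddCommGroup X] {r : ℝ}

/-- A tent of height `1` over the ball of radius `r` around `c`. -/
noncomputable def tent (r : ℝ) (c x : X) : ℝ := max 0 (1 - ‖x - c‖ / r)

lemma tent_nonneg (c x : X) : 0 ≤ tent r c x := le_max_left _ _

lemma tent_le_one (hr : 0 ≤ r) (c x : X) : tent r c x ≤ 1 :=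
  max_le zero_le_one (sub_le_self _ (by positivity))

lemma norm_sub_lt_of_tent_ne_zero (hr : 0 < r) {c x : X} (h : tent r c x ≠ 0) :
    ‖x - c‖ < r := by
  by_contra! hle
  exact h (max_eq_left (sub_nonpos.mpr ((one_le_div hr).mpr hle)))

lemma lipschitzWith_ofReal_tent (hr : 0 ≤ r) (c : X) :
    LipschitzWith (Real.toNNReal r⁻¹) fun x => (tent r c x : ℂ) := by
  refine LipschitzWith.of_dist_le_mul fun x y => ?_
  rw [dist_eq_norm, ← ofReal_sub, norm_real, Real.coe_toNNReal _ (inv_nonneg.mpr hr)]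
  calc |tent r c x - tent r c y|
      ≤ max |(0 : ℝ) - 0| |1 - ‖x - c‖ / r - (1 - ‖y - c‖ / r)| := abs_max_sub_max_le_max _ _ _ _
    _ = r⁻¹ * |‖y - c‖ - ‖x - c‖| := by
        rw [sub_sub_sub_cancel_left, ← sub_div, abs_div, abs_of_nonneg hr]
        simp [div_eq_inv_mul, mul_nonneg, hr]
    _ ≤ r⁻¹ * dist x y := by
        gcongr
        rw [dist_comm, dist_eq_norm]
        simpa using abs_norm_sub_norm_le (y - c) (x - c)

lemma le_sum_tent (hr : 0 < r) {t : Finset X} {p : X} (hp : ∃ c ∈ t, ‖p - c‖ ≤ r / 4)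
    (x : X) : 3 / 4 - r⁻¹ * ‖x - p‖ ≤ ∑ c ∈ t, tent r c x := by
  obtain ⟨c, hc, hpc⟩ := hp
  calc 3 / 4 - r⁻¹ * ‖x - p‖ ≤ 1 - ‖x - c‖ / r := by
        have : ‖x - c‖ / r ≤ (‖x - p‖ + r / 4) / r := by
          gcongr
          exact (norm_sub_le_norm_sub_add_norm_sub x p c).trans (by gcongr)
        have hquarter : r / 4 / r = 1 / 4 := by field_simp
        rw [add_div, hquarter] at this
        rw [inv_mul_eq_div]
        linarith
    _ ≤ tent r c x := le_max_right _ _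
    _ ≤ ∑ c ∈ t, tent r c x :=
        Finset.single_le_sum (f := fun c => tent r c x) (fun _ _ => tent_nonneg _ _) hc

lemma half_le_integral_sum_tent (hr : 0 < r) {F P : ℝ → X} (hF : Continuous F) (hP : Continuous P)
    {t : Finset X} (ht : ∀ τ, ∃ c ∈ t, ‖P τ - c‖ ≤ r / 4) {T : ℝ} (hT : 0 ≤ T)
    (hFP : ∫ τ in 0..T, ‖F τ - P τ‖ ≤ r / 4 * T) :
    T / 2 ≤ ∫ τ in 0..T, ∑ c ∈ t, tent r c (F τ) := by
  have hsum : Continuous fun τ => ∑ c ∈ t, tent r c (F τ) :=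
    continuous_finsetSum _ fun c _ => by unfold tent; fun_prop
  have hint : IntervalIntegrable (fun τ => r⁻¹ * ‖F τ - P τ‖) volume 0 T :=
    Continuous.intervalIntegrable (by fun_prop) _ _
  have hlow := intervalIntegral.integral_mono_on hT (.sub (by simp) hint)
    (hsum.intervalIntegrable _ _) fun τ _ => le_sum_tent hr (ht τ) (F τ)
  rw [intervalIntegral.integral_sub (by simp) hint, intervalIntegral.integral_const_mul,
    intervalIntegral.integral_const, sub_zero, smul_eq_mul] at hlow
  have hupp : r⁻¹ * (∫ τ in 0..T, ‖F τ - P τ‖) ≤ T / 4 := by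
    rw [inv_mul_le_iff₀ hr]
    linarith
  linarith

end Tent

section Besicovitch

variable {X : Type*} [NormedAddCommGroup X] [NormedSpace ℂ X] {Λ : AddSubgroup ℝ}

/-- `F` is a continuous Besicovitch almost periodic function with spectrum in `Λ`. The averages
are taken over `[-T, T]`, so that the notion is stable under `τ ↦ d * τ` for either sign of `d`. -/
structure IsBesicovitchAP (Λ : AddSubgroup ℝ) (F : ℝ → X) : Prop where
  continuous : Continuous F
  exists_trigPoly : ∀ δ > 0, ∃ P ∈ trigPoly Λ X,
    ∀ᶠ T : ℝ in atTop, ∫ τ in (-T)..T, ‖F τ - P τ‖ ≤ δ * T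

lemma intervalIntegral_zero_le_neg {f : ℝ → ℝ} (hf : Continuous f) (h0 : ∀ τ, 0 ≤ f τ) {T : ℝ}
    (hT : 0 ≤ T) : ∫ τ in 0..T, f τ ≤ ∫ τ in (-T)..T, f τ := by
  rw [← intervalIntegral.integral_add_adjacent_intervals (hf.intervalIntegrable (-T) 0)
    (hf.intervalIntegrable 0 T)]
  exact le_add_of_nonneg_left (intervalIntegral.integral_nonneg (by linarith) fun τ _ => h0 τ)

lemma intervalIntegral_comp_mul_le {f : ℝ → ℝ} (hf : Continuous f) (h0 : ∀ τ, 0 ≤ f τ) {d T : ℝ}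
    (hd : d ≠ 0) (hT : 0 ≤ T) :
    ∫ τ in 0..T, f (d * τ) ≤ |d|⁻¹ * ∫ τ in (-(|d| * T))..(|d| * T), f τ := by
  wlog hpos : 0 < d generalizing d f
  · have := this (hf.comp continuous_neg) (fun τ => h0 (-τ)) (neg_ne_zero.mpr hd)
      (neg_pos.mpr (lt_of_le_of_ne (not_lt.mp hpos) hd))
    simpa [intervalIntegral.integral_comp_neg] using this
  rw [intervalIntegral.integral_comp_mul_left _ hd, abs_of_pos hpos, mul_zero, smul_eq_mul]
  exact mul_le_mul_of_nonneg_left (intervalIntegral_zero_le_neg hf h0 (by positivity))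
    (by positivity)

lemma intervalIntegral_norm_mul_le {u v : ℝ → ℂ} (hu : Continuous u) (hv : Continuous v) {B : ℝ}
    (hB : ∀ τ, ‖u τ‖ ≤ B) {T : ℝ} (hT : 0 ≤ T) :
    ∫ τ in 0..T, ‖u τ * v τ‖ ≤ B * ∫ τ in 0..T, ‖v τ‖ := by
  rw [← intervalIntegral.integral_const_mul]
  refine intervalIntegral.integral_mono_on hT (Continuous.intervalIntegrable (by fun_prop) _ _)
    (Continuous.intervalIntegrable (by fun_prop) _ _) fun τ _ => ?_
  rw [norm_mul]
  gcongr
  exact hB τ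

namespace IsBesicovitchAP

lemma comp_lipschitz {F : ℝ → X} (hF : IsBesicovitchAP Λ F) {ψ : X → ℂ} {L : NNReal}
    (hψ : LipschitzWith L ψ) : IsBesicovitchAP Λ (ψ ∘ F) where
  continuous := hψ.continuous.comp hF.continuous
  exists_trigPoly δ hδ := by
    obtain ⟨P, hP, hFP⟩ := hF.exists_trigPoly (δ / (2 * (L + 1))) (by positivity)
    obtain ⟨Q, hQ, hPQ⟩ := exists_trigPoly_norm_comp_sub_le hP hψ.continuous
      (show 0 < δ / 4 by positivity)
    refine ⟨Q, hQ, ?_⟩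
    have hFc := hF.continuous
    have hPc := continuous_of_mem_trigPoly hP
    have hQc := continuous_of_mem_trigPoly hQ
    have hψc := hψ.continuous
    have hL : (L : ℝ) * (δ / (2 * (L + 1))) ≤ δ / 2 := by
      rw [← mul_div_assoc, div_le_div_iff₀ (by positivity) two_pos]
      nlinarith
    filter_upwards [hFP, eventually_ge_atTop 0] with T hT hT0
    have hpt (τ : ℝ) : ‖ψ (F τ) - Q τ‖ ≤ L * ‖F τ - P τ‖ + δ / 4 :=
      (norm_sub_le_norm_sub_add_norm_sub _ (ψ (P τ)) _).trans
        (add_le_add (hψ.norm_sub_le _ _) (hPQ τ))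
    calc ∫ τ in (-T)..T, ‖(ψ ∘ F) τ - Q τ‖
        ≤ ∫ τ in (-T)..T, (L * ‖F τ - P τ‖ + δ / 4) :=
          intervalIntegral.integral_mono_on (by linarith)
            (Continuous.intervalIntegrable (by fun_prop) _ _)
            (Continuous.intervalIntegrable (by fun_prop) _ _) fun τ _ => hpt τ
      _ = L * (∫ τ in (-T)..T, ‖F τ - P τ‖) + δ / 2 * T := by
          rw [intervalIntegral.integral_add (Continuous.intervalIntegrable (by fun_prop) _ _)
            (by simp), intervalIntegral.integral_const_mul, intervalIntegral.integral_const,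
            smul_eq_mul]
          ring
      _ ≤ L * (δ / (2 * (L + 1)) * T) + δ / 2 * T := by gcongr
      _ ≤ δ * T := by nlinarith

lemma exists_trigPoly_zero {F : ℝ → X} (hF : IsBesicovitchAP Λ F) {δ : ℝ} (hδ : 0 < δ) :
    ∃ P ∈ trigPoly Λ X, ∀ᶠ T : ℝ in atTop, ∫ τ in 0..T, ‖F τ - P τ‖ ≤ δ * T := by
  obtain ⟨P, hP, hFP⟩ := hF.exists_trigPoly δ hδ
  refine ⟨P, hP, ?_⟩
  filter_upwards [hFP, eventually_ge_atTop 0] with T hT hT0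
  exact (intervalIntegral_zero_le_neg (hF.continuous.sub (continuous_of_mem_trigPoly hP)).norm
    (fun _ => norm_nonneg _) hT0).trans hT

lemma exists_hasMeanValue {f : ℝ → ℂ} (hf : IsBesicovitchAP Λ f) : ∃ a, HasMeanValue f a :=
  HasMeanValue.exists_of_approx hf.continuous fun _ hδ => by
    obtain ⟨p, hp, hfp⟩ := hf.exists_trigPoly_zero hδ
    obtain ⟨a, ha⟩ := exists_hasMeanValue_of_mem_trigPoly hp
    exact ⟨p, a, ha, hfp⟩

variable {d : ℝ} {f g p : ℝ → ℂ} {a b : ℂ}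

lemma exists_trigPoly_dilate (hg : IsBesicovitchAP Λ g) (hd : d ≠ 0) (hb : HasMeanValue g b)
    {δ : ℝ} (hδ : 0 < δ) :
    ∃ q ∈ trigPoly Λ ℂ, ∃ b', HasMeanValue q b' ∧ ‖b' - b‖ ≤ δ ∧
      ∀ᶠ T : ℝ in atTop, ∫ τ in 0..T, ‖g (d * τ) - q (d * τ)‖ ≤ δ * T := by
  obtain ⟨q, hq, hgq⟩ := hg.exists_trigPoly δ hδ
  have hc := (hg.continuous.sub (continuous_of_mem_trigPoly hq)).norm
  obtain ⟨b', hb'⟩ := exists_hasMeanValue_of_mem_trigPoly hq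
  refine ⟨q, hq, b', hb', ?_, ?_⟩
  · rw [norm_sub_rev]
    refine hb.norm_sub_le hb' ?_
    filter_upwards [hgq, eventually_ge_atTop 0] with T hT hT0
    exact (intervalIntegral_zero_le_neg hc (fun _ => norm_nonneg _) hT0).trans hT
  · have hlim : Tendsto (fun T : ℝ => |d| * T) atTop atTop :=
      tendsto_id.const_mul_atTop (abs_pos.mpr hd)
    filter_upwards [hlim.eventually hgq, eventually_ge_atTop 0] with T hT hT0
    calc ∫ τ in 0..T, ‖g (d * τ) - q (d * τ)‖
        ≤ |d|⁻¹ * ∫ τ in (-(|d| * T))..(|d| * T), ‖g τ - q τ‖ :=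
          intervalIntegral_comp_mul_le hc (fun _ => norm_nonneg _) hd hT0
      _ ≤ |d|⁻¹ * (δ * (|d| * T)) := by gcongr
      _ = δ * T := by
          have := abs_ne_zero.mpr hd
          field_simp

lemma hasMeanValue_trigPoly_mul_dilate (hd0 : d ≠ 0)
    (hd : ∀ l ∈ Λ, ∀ m ∈ Λ, l + d * m = 0 → m = 0) (hp : p ∈ trigPoly Λ ℂ)
    (hg : IsBesicovitchAP Λ g) (ha : HasMeanValue p a) (hb : HasMeanValue g b) :
    HasMeanValue (fun τ => p τ * g (d * τ)) (a * b) := by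
  obtain ⟨B, hB⟩ := exists_norm_le_of_mem_trigPoly hp
  have hpc := continuous_of_mem_trigPoly hp
  have hgc := hg.continuous
  refine .of_approx (by fun_prop) (max ‖a‖ B) fun δ hδ => ?_
  obtain ⟨q, hq, b', hb', hbb', hgq⟩ := hg.exists_trigPoly_dilate hd0 hb hδ
  have hqc := continuous_of_mem_trigPoly hq
  refine ⟨_, _, hasMeanValue_mul_dilate_of_mem_trigPoly hd hp hq ha hb', ?_, ?_⟩
  · rw [← mul_sub, norm_mul]
    gcongr
    exact le_max_left _ _
  · filter_upwards [hgq, eventually_ge_atTop 0] with T hT hT0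
    calc ∫ τ in 0..T, ‖p τ * g (d * τ) - p τ * q (d * τ)‖
        = ∫ τ in 0..T, ‖p τ * (g (d * τ) - q (d * τ))‖ := by simp_rw [mul_sub]
      _ ≤ max ‖a‖ B * ∫ τ in 0..T, ‖g (d * τ) - q (d * τ)‖ :=
          intervalIntegral_norm_mul_le hpc (by fun_prop)
            (fun τ => (hB τ).trans (le_max_right _ _)) hT0
      _ ≤ max ‖a‖ B * δ * T := by
          rw [mul_assoc]
          gcongr

lemma hasMeanValue_mul_dilate (hd0 : d ≠ 0) (hd : ∀ l ∈ Λ, ∀ m ∈ Λ, l + d * m = 0 → m = 0)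
    (hf : IsBesicovitchAP Λ f) (hg : IsBesicovitchAP Λ g) {B : ℝ} (hB : ∀ τ, ‖g τ‖ ≤ B)
    (ha : HasMeanValue f a) (hb : HasMeanValue g b) :
    HasMeanValue (fun τ => f τ * g (d * τ)) (a * b) := by
  have hfc := hf.continuous
  have hgc := hg.continuous
  refine .of_approx (by fun_prop) (max ‖b‖ B) fun δ hδ => ?_
  obtain ⟨p, hp, hfp⟩ := hf.exists_trigPoly_zero hδ
  obtain ⟨a', ha'⟩ := exists_hasMeanValue_of_mem_trigPoly hp
  have hpc := continuous_of_mem_trigPoly hp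
  refine ⟨_, _, hasMeanValue_trigPoly_mul_dilate hd0 hd hp hg ha' hb, ?_, ?_⟩
  · rw [← sub_mul, norm_mul, norm_sub_rev, mul_comm]
    gcongr
    exacts [le_max_left _ _, ha.norm_sub_le ha' hfp]
  · filter_upwards [hfp, eventually_ge_atTop 0] with T hT hT0
    calc ∫ τ in 0..T, ‖f τ * g (d * τ) - p τ * g (d * τ)‖
        = ∫ τ in 0..T, ‖g (d * τ) * (f τ - p τ)‖ := by simp_rw [mul_comm (g _), sub_mul]
      _ ≤ max ‖b‖ B * ∫ τ in 0..T, ‖f τ - p τ‖ :=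
          intervalIntegral_norm_mul_le (by fun_prop) (by fun_prop)
            (fun τ => (hB (d * τ)).trans (le_max_right _ _)) hT0
      _ ≤ max ‖b‖ B * δ * T := by
          rw [mul_assoc]
          gcongr

end IsBesicovitchAP

-- Finitely many tents cover the approximating trigonometric polynomial, whose range is totally
-- bounded, so their sum has mean at least `1 / 2`.
lemma IsBesicovitchAP.exists_tent_hasMeanValue_ne_zero {F : ℝ → X} (hF : IsBesicovitchAP Λ F)
    {r : ℝ} (hr : 0 < r) :
    ∃ c, ∃ a ≠ 0, HasMeanValue (fun τ => (tent r c (F τ) : ℂ)) a := by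
  by_contra! hzero
  have hFt (c : X) : IsBesicovitchAP Λ fun τ => (tent r c (F τ) : ℂ) :=
    hF.comp_lipschitz (lipschitzWith_ofReal_tent hr.le c)
  have hmean (c : X) : HasMeanValue (fun τ => (tent r c (F τ) : ℂ)) 0 := by
    obtain ⟨a, ha⟩ := (hFt c).exists_hasMeanValue
    by_cases h : a = 0
    exacts [h ▸ ha, absurd ha (hzero c a h)]
  obtain ⟨P, hP, hFP⟩ := hF.exists_trigPoly_zero (show 0 < r / 4 by positivity)
  obtain ⟨t, ht, hPt⟩ := Metric.totallyBounded_iff.mp (totallyBounded_range_of_mem_trigPoly hP)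
    (r / 4) (by positivity)
  lift t to Finset X using ht
  have hcover (τ : ℝ) : ∃ c ∈ t, ‖P τ - c‖ ≤ r / 4 := by
    obtain ⟨c, hc, hτ⟩ := Set.mem_iUnion₂.mp (hPt (Set.mem_range_self τ))
    exact ⟨c, hc, (mem_ball_iff_norm.mp hτ).le⟩
  have hev := (HasMeanValue.sum t fun c _ => hmean c).tendsto.norm.eventually
    (gt_mem_nhds (show ‖∑ _ ∈ t, (0 : ℂ)‖ < 1 / 2 by simp))
  obtain ⟨T, hT, hFPT, hT0⟩ := (hev.and (hFP.and (eventually_gt_atTop 0))).exists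
  have hnorm : ‖∫ τ in 0..T, (∑ c ∈ t, fun τ => (tent r c (F τ) : ℂ)) τ‖ =
      |∫ τ in 0..T, ∑ c ∈ t, tent r c (F τ)| := by
    simp only [Finset.sum_apply, ← ofReal_sum, intervalIntegral.integral_ofReal, norm_real,
      Real.norm_eq_abs]
  rw [norm_smul, norm_inv, Real.norm_of_nonneg hT0.le, inv_mul_lt_iff₀ hT0, hnorm] at hT
  linarith [le_abs_self (∫ τ in 0..T, ∑ c ∈ t, tent r c (F τ)),
    half_le_integral_sum_tent hr hF.continuous (continuous_of_mem_trigPoly hP) hcover hT0.le hFPT]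

-- `tent (F τ) * tent (F (d * τ))` has mean `a * a ≠ 0` and vanishes outside the set.
theorem IsBesicovitchAP.lowerDens_norm_sub_lt_pos {d : ℝ} (hd0 : d ≠ 0)
    (hd : ∀ l ∈ Λ, ∀ m ∈ Λ, l + d * m = 0 → m = 0) {F : ℝ → X} (hF : IsBesicovitchAP Λ F)
    {ε : ℝ} (hε : 0 < ε) : 0 < lowerDens {τ | ‖F (d * τ) - F τ‖ < ε} := by
  obtain ⟨c, a, ha0, ha⟩ := hF.exists_tent_hasMeanValue_ne_zero (half_pos hε)
  have hFt : IsBesicovitchAP Λ fun τ => (tent (ε / 2) c (F τ) : ℂ) :=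
    hF.comp_lipschitz (lipschitzWith_ofReal_tent (by positivity) c)
  have hle (τ : ℝ) : ‖(tent (ε / 2) c (F τ) : ℂ)‖ ≤ 1 := by
    rw [norm_real, Real.norm_of_nonneg (tent_nonneg _ _)]
    exact tent_le_one (by positivity) _ _
  refine (hasMeanValue_mul_dilate hd0 hd hFt hFt hle ha ha).lowerDens_pos (mul_ne_zero ha0 ha0)
    (fun τ => ?_) fun τ hτ => ?_
  · rw [norm_mul]
    exact mul_le_one₀ (hle _) (norm_nonneg _) (hle _)
  · rw [← ofReal_mul, ofReal_ne_zero, mul_ne_zero_iff] at hτ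
    have h1 := norm_sub_lt_of_tent_ne_zero (half_pos hε) hτ.1
    have h2 := norm_sub_lt_of_tent_ne_zero (half_pos hε) hτ.2
    rw [norm_sub_rev] at h1
    exact (norm_sub_le_norm_sub_add_norm_sub _ c _).trans_lt (by linarith)

end Besicovitch

section Plancherel

open FourierTransform SchwartzMap

variable {V F : Type*} [NormedAddCommGroup V] [InnerProductSpace ℝ V] [FiniteDimensional ℝ V]
  [MeasurableSpace V] [BorelSpace V] [NormedAddCommGroup F] [InnerProductSpace ℂ F]
  [CompleteSpace F]

-- Both sides define the same tempered distribution.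
lemma fourier_toLp_ae_eq {f : V → F} (hf : Integrable f) (hf2 : MemLp f 2) :
    (𝓕 (hf2.toLp f) : Lp F 2 (volume : Measure V)) =ᵐ[volume] 𝓕 f := by
  refine ae_eq_of_integral_contDiff_smul_eq ((Lp.memLp _).locallyIntegrable one_le_two)
    (VectorFourier.fourierIntegral_continuous Real.continuous_fourierChar
      continuous_inner hf).locallyIntegrable fun g hg hgc => ?_
  let φ : 𝓢(V, ℂ) := HasCompactSupport.toSchwartzMap (f := fun x => (g x : ℂ))
    (hgc.comp_left (g := ((↑) : ℝ → ℂ)) ofReal_zero) (ofRealCLM.contDiff.comp hg)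
  have hφ (x : V) : φ x = g x := rfl
  calc ∫ x, g x • (𝓕 (hf2.toLp f) : Lp F 2 (volume : Measure V)) x
      = Lp.toTemperedDistribution (𝓕 (hf2.toLp f)) φ := by
        rw [Lp.toTemperedDistribution_apply]
        simp only [hφ, coe_smul]
    _ = ∫ x, 𝓕 φ x • f x := by
        rw [← Lp.fourier_toTemperedDistribution_eq, TemperedDistribution.fourier_apply,
          Lp.toTemperedDistribution_apply]
        refine integral_congr_ae ?_
        filter_upwards [hf2.coeFn_toLp] with x hx
        rw [hx]
    _ = ∫ x, φ x • 𝓕 f x := by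
        rw [fourier_coe]
        simpa using! (VectorFourier.integral_fourierIntegral_smul_eq_flip (L := innerₗ V)
          Real.continuous_fourierChar continuous_inner φ.integrable hf)
    _ = ∫ x, g x • 𝓕 f x := by simp only [hφ, coe_smul]

lemma eLpNorm_fourier_eq {f : V → F} (hf : Integrable f) (hf2 : MemLp f 2) :
    eLpNorm (𝓕 f) 2 = eLpNorm f 2 := by
  have h := congrArg ENNReal.ofReal (Lp.norm_fourier_eq (hf2.toLp f))
  simp only [Lp.norm_def, ENNReal.ofReal_toReal (Lp.eLpNorm_ne_top _)] at h
  rwa [eLpNorm_congr_ae (fourier_toLp_ae_eq hf hf2), eLpNorm_congr_ae hf2.coeFn_toLp] at h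

end Plancherel

section MellinPlancherel

open scoped FourierTransform

variable {E F : Type*} [NormedAddCommGroup E] [NormedSpace ℝ E] [NormedAddCommGroup F]
  [InnerProductSpace ℂ F]

lemma hasDerivWithinAt_exp_neg (u : ℝ) :
    HasDerivWithinAt (fun u => Real.exp (-u)) (-Real.exp (-u)) Set.univ u := by
  simpa using! (hasDerivAt_neg u).exp

lemma injOn_exp_neg : Set.univ.InjOn fun u : ℝ => Real.exp (-u) :=
  fun _ _ _ _ h => neg_injective (Real.exp_injective h)

lemma image_exp_neg_univ : (fun u : ℝ => Real.exp (-u)) '' Set.univ = Set.Ioi 0 := by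
  rw [Set.image_univ, ← Real.range_exp]
  exact neg_surjective.range_comp Real.exp

lemma abs_deriv_exp_neg_smul (f : ℝ → E) (a u : ℝ) :
    |(-Real.exp (-u))| • Real.exp (-u) ^ (a - 1) • f (Real.exp (-u)) =
      Real.exp (-a * u) • f (Real.exp (-u)) := by
  rw [abs_neg, abs_of_pos (Real.exp_pos _), ← Real.exp_mul, smul_smul, ← Real.exp_add]
  ring_nf

lemma integrableOn_rpow_smul_iff (f : ℝ → E) (a : ℝ) :
    IntegrableOn (fun y => y ^ (a - 1) • f y) (Set.Ioi 0) ↔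
      Integrable fun u => Real.exp (-a * u) • f (Real.exp (-u)) := by
  rw [← image_exp_neg_univ, integrableOn_image_iff_integrableOn_abs_deriv_smul .univ
    (fun u _ => hasDerivWithinAt_exp_neg u) injOn_exp_neg, integrableOn_univ]
  simp only [abs_deriv_exp_neg_smul]

lemma integral_rpow_smul (f : ℝ → E) (a : ℝ) :
    ∫ y in Set.Ioi 0, y ^ (a - 1) • f y = ∫ u, Real.exp (-a * u) • f (Real.exp (-u)) := by
  rw [← image_exp_neg_univ, integral_image_eq_integral_abs_deriv_smul .univ
    (fun u _ => hasDerivWithinAt_exp_neg u) injOn_exp_neg, setIntegral_univ]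
  simp only [abs_deriv_exp_neg_smul]

lemma mellinConvergent_ofReal_iff {f : ℝ → F} {σ : ℝ} :
    MellinConvergent f σ ↔ Integrable fun u => Real.exp (-σ * u) • f (Real.exp (-u)) := by
  rw [← integrableOn_rpow_smul_iff]
  refine integrableOn_congr_fun (fun y hy => ?_) measurableSet_Ioi
  rw [← coe_smul, ofReal_cpow (le_of_lt hy)]
  simp

lemma norm_exp_smul_sq (f : ℝ → E) (σ u : ℝ) :
    ‖Real.exp (-σ * u) • f (Real.exp (-u))‖ ^ 2 =
      Real.exp (-(2 * σ) * u) • ‖f (Real.exp (-u))‖ ^ 2 := by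
  rw [norm_smul, mul_pow, Real.norm_of_nonneg (Real.exp_pos _).le, ← Real.exp_nat_mul, smul_eq_mul]
  congr 2
  push_cast
  ring

variable {f : ℝ → F} {σ : ℝ}

lemma memLp_exp_smul (hf : MellinConvergent f σ)
    (hf2 : IntegrableOn (fun y => y ^ (2 * σ - 1) • ‖f y‖ ^ 2) (Set.Ioi 0)) :
    MemLp (fun u => Real.exp (-σ * u) • f (Real.exp (-u))) 2 := by
  rw [memLp_two_iff_integrable_sq_norm (mellinConvergent_ofReal_iff.mp hf).aestronglyMeasurable]
  simpa only [norm_exp_smul_sq] using (integrableOn_rpow_smul_iff _ _).mp hf2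

lemma mellin_vertical_eq_fourier (f : ℝ → F) (σ t : ℝ) :
    mellin f (σ + t * I) =
      𝓕 (fun u => Real.exp (-σ * u) • f (Real.exp (-u))) (t / (2 * Real.pi)) := by
  rw [mellin_eq_fourier]
  simp

lemma integrable_norm_fourier_sq [CompleteSpace F] {h : ℝ → F} (hh : Integrable h)
    (hh2 : MemLp h 2) : Integrable fun t => ‖𝓕 h t‖ ^ 2 := by
  have hc : Continuous (𝓕 h) := VectorFourier.fourierIntegral_continuous
    Real.continuous_fourierChar continuous_inner hh
  rw [← memLp_two_iff_integrable_sq_norm hc.aestronglyMeasurable]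
  exact ⟨hc.aestronglyMeasurable, (eLpNorm_fourier_eq hh hh2).trans_lt hh2.2⟩

lemma integral_norm_fourier_sq [CompleteSpace F] {h : ℝ → F} (hh : Integrable h)
    (hh2 : MemLp h 2) : ∫ t, ‖𝓕 h t‖ ^ 2 = ∫ u, ‖h u‖ ^ 2 := by
  have hc : Continuous (𝓕 h) := VectorFourier.fourierIntegral_continuous
    Real.continuous_fourierChar continuous_inner hh
  have hF : MemLp (𝓕 h) 2 := (memLp_two_iff_integrable_sq_norm hc.aestronglyMeasurable).mpr
    (integrable_norm_fourier_sq hh hh2)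
  have key (g : ℝ → F) (hg : MemLp g 2) : ∫ u, ‖g u‖ ^ 2 = (eLpNorm g 2).toReal ^ 2 := by
    rw [toReal_eLpNorm hg.aestronglyMeasurable,
      lpNorm_eq_integral_norm_rpow_toReal (by simp) (by simp) hg.aestronglyMeasurable,
      ← Real.rpow_natCast, ← Real.rpow_mul (by positivity)]
    simp
  rw [key _ hF, key _ hh2, eLpNorm_fourier_eq hh hh2]

theorem integrable_norm_mellin_vertical_sq [CompleteSpace F] (hf : MellinConvergent f σ)
    (hf2 : IntegrableOn (fun y => y ^ (2 * σ - 1) • ‖f y‖ ^ 2) (Set.Ioi 0)) :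
    Integrable fun t : ℝ => ‖mellin f (σ + t * I)‖ ^ 2 := by
  simp only [mellin_vertical_eq_fourier]
  exact (integrable_norm_fourier_sq (mellinConvergent_ofReal_iff.mp hf)
    (memLp_exp_smul hf hf2)).comp_div (by positivity)

theorem integral_norm_mellin_vertical_sq [CompleteSpace F] (hf : MellinConvergent f σ)
    (hf2 : IntegrableOn (fun y => y ^ (2 * σ - 1) • ‖f y‖ ^ 2) (Set.Ioi 0)) :
    ∫ t : ℝ, ‖mellin f (σ + t * I)‖ ^ 2 =
      2 * Real.pi * ∫ y in Set.Ioi 0, y ^ (2 * σ - 1) • ‖f y‖ ^ 2 := by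
  simp only [mellin_vertical_eq_fourier]
  rw [Measure.integral_comp_div
      (fun t => ‖𝓕 (fun u => Real.exp (-σ * u) • f (Real.exp (-u))) t‖ ^ 2),
    integral_norm_fourier_sq (mellinConvergent_ofReal_iff.mp hf) (memLp_exp_smul hf hf2),
    abs_of_pos (by positivity), integral_rpow_smul]
  simp only [norm_exp_smul_sq, smul_eq_mul]

end MellinPlancherel

section ZetaMellin

lemma hasMellin_congr_of_ne {E : Type*} [NormedAddCommGroup E] [NormedSpace ℂ E] {f g : ℝ → E}
    {s : ℂ} {m : E} (c : ℝ) (hf : HasMellin f s m) (h : ∀ t, 0 < t → t ≠ c → f t = g t) :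
    HasMellin g s m := by
  have hae : (fun t : ℝ => (t : ℂ) ^ (s - 1) • f t) =ᵐ[volume.restrict (Set.Ioi 0)]
      fun t => (t : ℂ) ^ (s - 1) • g t := by
    filter_upwards [ae_restrict_mem measurableSet_Ioi,
      ae_restrict_of_ae ((Set.countable_singleton c).ae_notMem volume)] with t ht htc
    rw [h t ht htc]
  exact ⟨Integrable.congr hf.1 hae, (integral_congr_ae hae).symm.trans hf.2⟩

lemma hasMellin_cpow_Ioi {c : ℝ} (hc : 0 < c) {a s : ℂ} (hs : s.re + a.re < 0) :
    HasMellin (Set.indicator (Set.Ioi c) fun t : ℝ => (t : ℂ) ^ a) s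
      (-(c : ℂ) ^ (s + a) / (s + a)) := by
  have hre : (s + a - 1).re < -1 := by simpa using by linarith
  have hsub : Set.Ioi c ⊆ Set.Ioi 0 := Set.Ioi_subset_Ioi hc.le
  have hmul :
      (fun t : ℝ => (t : ℂ) ^ (s - 1) • (Set.Ioi c).indicator (fun t : ℝ => (t : ℂ) ^ a) t) =
      (Set.Ioi c).indicator fun t : ℝ => (t : ℂ) ^ (s + a - 1) := by
    ext t
    by_cases ht : t ∈ Set.Ioi c
    · rw [Set.indicator_of_mem ht, Set.indicator_of_mem ht, smul_eq_mul,
        ← cpow_add _ _ (ofReal_ne_zero.mpr (hc.trans ht).ne')]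
      ring_nf
    · simp [Set.indicator_of_notMem ht]
  constructor
  · rw [MellinConvergent, hmul, IntegrableOn, integrable_indicator_iff measurableSet_Ioi,
      IntegrableOn, Measure.restrict_restrict_of_subset hsub]
    exact integrableOn_Ioi_cpow_of_lt hre hc
  · rw [mellin, hmul, setIntegral_indicator measurableSet_Ioi, Set.inter_eq_right.mpr hsub,
      integral_Ioi_cpow_of_lt hre hc, sub_add_cancel]

/-- The fractional part cut off to `(1, ∞)`, whose Mellin transform converges in a half-plane. -/
noncomputable def fractTail : ℝ → ℂ :=
  (Set.Ioi 1).indicator fun t => ((Int.fract t : ℝ) : ℂ)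

lemma measurable_fractTail : Measurable fractTail :=
  (measurable_ofReal.comp measurable_fract).indicator measurableSet_Ioi

lemma norm_fractTail_le (t : ℝ) : ‖fractTail t‖ ≤ 1 := by
  refine (norm_indicator_le_norm_self _ _).trans ?_
  rw [norm_real, Real.norm_of_nonneg (Int.fract_nonneg t)]
  exact (Int.fract_lt_one t).le

lemma locallyIntegrableOn_fractTail (S : Set ℝ) : LocallyIntegrableOn fractTail S :=
  ((locallyIntegrable_const (1 : ℝ)).mono measurable_fractTail.aestronglyMeasurable
    (Eventually.of_forall fun t => by simpa using norm_fractTail_le t)).locallyIntegrableOn _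

lemma fractTail_isBigO_atTop : fractTail =O[atTop] fun t : ℝ => t ^ (-(0 : ℝ)) :=
  .of_bound 1 (Eventually.of_forall fun t => by simpa using norm_fractTail_le t)

lemma fractTail_isBigO_nhdsGT_zero (b : ℝ) : fractTail =O[𝓝[>] 0] fun t : ℝ => t ^ (-b) := by
  have h : fractTail =ᶠ[𝓝[>] 0] fun _ => 0 := by
    filter_upwards [Ioo_mem_nhdsGT one_pos] with t ht
    exact Set.indicator_of_notMem (Set.notMem_Ioi.mpr ht.2.le) _
  exact h.trans_isBigO (Asymptotics.isBigO_zero _ _)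

lemma mellinConvergent_fractTail {s : ℂ} (hs : 0 < s.re) : MellinConvergent fractTail (-s) :=
  mellinConvergent_of_isBigO_rpow (locallyIntegrableOn_fractTail _) fractTail_isBigO_atTop
    (by simpa using hs) (fractTail_isBigO_nhdsGT_zero (-s.re - 1)) (by simp)

lemma differentiableAt_mellin_fractTail_neg {s : ℂ} (hs : 0 < s.re) :
    DifferentiableAt ℂ (fun s => mellin fractTail (-s)) s :=
  (mellin_differentiableAt_of_isBigO_rpow (locallyIntegrableOn_fractTail _)
    fractTail_isBigO_atTop (by simpa using hs) (fractTail_isBigO_nhdsGT_zero (-s.re - 1))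
    (by simp)).comp s differentiable_neg.differentiableAt

lemma mellin_floor {s : ℂ} (hs : 1 < s.re) :
    mellin (fun t : ℝ => (⌊t⌋₊ : ℂ)) (-s) = riemannZeta s / s := by
  have hs0 : s ≠ 0 := ne_zero_of_re_pos (one_pos.trans hs)
  have h := LSeries_eq_mul_integral' 1 zero_le_one hs
    (.of_bound 1 (Eventually.of_forall fun n => by simp))
  rw [LSeries_one_eq_riemannZeta hs] at h
  have hsupp : ∫ t in Set.Ioi (1 : ℝ), (t : ℂ) ^ (-s - 1) • (⌊t⌋₊ : ℂ) =
      mellin (fun t : ℝ => (⌊t⌋₊ : ℂ)) (-s) := by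
    rw [← integral_Ici_eq_integral_Ioi]
    refine (setIntegral_eq_of_subset_of_forall_sdiff_eq_zero measurableSet_Ioi
      (Set.Ici_subset_Ioi.mpr one_pos) fun t ht => ?_).symm
    rw [Nat.floor_eq_zero.mpr (not_le.mp ht.2), Nat.cast_zero, smul_zero]
  rw [h, mul_div_cancel_left₀ _ hs0, ← hsupp]
  refine setIntegral_congr_fun measurableSet_Ioi fun t _ => ?_
  simp only [Pi.one_apply, Finset.sum_const, Nat.card_Icc, Nat.add_sub_cancel, nsmul_one,
    smul_eq_mul, mul_comm, neg_add']

lemma riemannZeta_eq_mellin_fractTail_of_one_lt {s : ℂ} (hs : 1 < s.re) :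
    riemannZeta s = s / (s - 1) - s * mellin fractTail (-s) := by
  have hs0 : s ≠ 0 := ne_zero_of_re_pos (one_pos.trans hs)
  have hid := hasMellin_cpow_Ioi one_pos (a := 1) (s := -s) (by simpa using hs)
  have hfloor := hasMellin_congr_of_ne (g := fun t : ℝ => (⌊t⌋₊ : ℂ)) 1
    (hasMellin_sub hid.1 (mellinConvergent_fractTail (one_pos.trans hs))) fun t ht ht1 => ?_
  · have h := hfloor.2
    rw [mellin_floor hs, hid.2, ofReal_one, one_cpow, div_eq_iff hs0, ← sub_eq_neg_add,
      ← neg_sub s, neg_div_neg_eq] at h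
    rw [h]
    ring
  · rcases lt_or_gt_of_ne ht1 with h | h
    · simp [fractTail, h.le, Nat.floor_eq_zero.mpr h]
    · simp only [fractTail, Set.indicator_of_mem (Set.mem_Ioi.mpr h), cpow_one, ← ofReal_sub,
        Int.self_sub_fract, ← natCast_floor_eq_intCast_floor ht.le, ofReal_natCast]

lemma riemannZeta₁_eq_mellin_fractTail {s : ℂ} (hs : 0 < s.re) :
    riemannZeta₁ s = s - (s - 1) * s * mellin fractTail (-s) := by
  have hU : IsOpen {s : ℂ | 0 < s.re} := isOpen_lt continuous_const continuous_re
  have hd : DifferentiableOn ℂ (fun s => s - (s - 1) * s * mellin fractTail (-s))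
      {s | 0 < s.re} := fun z hz => by
    have := differentiableAt_mellin_fractTail_neg hz
    exact DifferentiableAt.differentiableWithinAt (by fun_prop)
  refine (differentiable_riemannZeta₁.differentiableOn.analyticOnNhd
    hU).eqOn_of_preconnected_of_eventuallyEq (hd.analyticOnNhd hU)
    (convex_halfSpace_re_gt 0).isPreconnected (z₀ := 2) (by simp) ?_ hs
  filter_upwards [(isOpen_lt continuous_const continuous_re).mem_nhds
    (show (1 : ℝ) < (2 : ℂ).re by simp)] with z hz
  have hz1 : z - 1 ≠ 0 := ne_zero_of_re_pos (by simpa using hz)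
  have h := riemannZeta_eq_inv_sub_mul (sub_ne_zero.mp hz1)
  rw [riemannZeta_eq_mellin_fractTail_of_one_lt hz] at h
  field_simp at h
  rw [← h]
  ring

lemma hasMellin_fract {s : ℂ} (hs : 0 < s.re) (hs1 : s.re < 1) :
    HasMellin (fun t : ℝ => ((Int.fract t : ℝ) : ℂ)) (-s) (-riemannZeta s / s) := by
  have hne : s ≠ 1 := by rintro rfl; simp at hs1
  have hs0 : s ≠ 0 := ne_zero_of_re_pos hs
  have hs1' : s - 1 ≠ 0 := sub_ne_zero.mpr hne
  have hid := hasMellin_cpow_Ioc 1 (s := -s) (by simpa using hs1)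
  have hadd := hasMellin_add hid.1 (mellinConvergent_fractTail hs)
  rw [hid.2] at hadd
  have hval : -riemannZeta s / s = 1 / (-s + 1) + mellin fractTail (-s) := by
    have : -s + 1 ≠ 0 := by rwa [neg_add_eq_sub, ← neg_sub, neg_ne_zero]
    rw [riemannZeta_eq_inv_sub_mul hne, riemannZeta₁_eq_mellin_fractTail hs]
    field_simp
    ring
  rw [hval]
  refine hasMellin_congr_of_ne 1 hadd fun t ht ht1 => ?_
  rcases lt_or_gt_of_ne ht1 with h | h
  · simp [fractTail, ht, h.le, Int.fract_eq_self.mpr ⟨ht.le, h⟩]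
  · simp [fractTail, h]

end ZetaMellin

section Discrepancy

/-- The partial sum `∑_{n ≤ N} n⁻ˢ` of the Dirichlet series of `ζ`. -/
noncomputable def zetaPartialSum (N : ℕ) (s : ℂ) : ℂ := ∑ n ∈ Finset.Icc 1 N, (n : ℂ) ^ (-s)

/-- The number of integers in `(N, y]` minus `y`, for `0 ≤ y`; the truncated subtraction makes the
count zero when `y < N`. Its Mellin transform is `(ζ - zetaPartialSum N) / s`. -/
noncomputable def discrepancy (N : ℕ) (y : ℝ) : ℝ := ((⌊y⌋₊ - N : ℕ) : ℝ) - y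

@[fun_prop]
lemma measurable_discrepancy (N : ℕ) : Measurable (discrepancy N) := by
  have : Measurable fun y : ℝ => ((⌊y⌋₊ - N : ℕ) : ℝ) :=
    (measurable_from_nat (f := fun n => ((n - N : ℕ) : ℝ))).comp Nat.measurable_floor
  exact this.sub measurable_id

lemma discrepancy_zero {y : ℝ} (hy : 0 ≤ y) : discrepancy 0 y = -Int.fract y := by
  rw [discrepancy, tsub_zero, natCast_floor_eq_intCast_floor hy, ← Int.self_sub_floor, neg_sub]

lemma discrepancy_of_le {N : ℕ} {y : ℝ} (h : N ≤ y) : discrepancy N y = -Int.fract y - N := by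
  rw [discrepancy, Nat.cast_sub (Nat.le_floor h),
    natCast_floor_eq_intCast_floor ((Nat.cast_nonneg N).trans h), ← Int.self_sub_floor]
  ring

lemma discrepancy_succ_of_lt {N : ℕ} {y : ℝ} (h : y < N + 1) :
    discrepancy (N + 1) y = discrepancy N y := by
  have : ⌊y⌋₊ < N + 1 := Nat.floor_lt' N.succ_ne_zero |>.mpr (by exact_mod_cast h)
  rw [discrepancy, discrepancy, show ⌊y⌋₊ - (N + 1) = ⌊y⌋₊ - N by omega]

lemma discrepancy_succ_of_le {N : ℕ} {y : ℝ} (h : N + 1 ≤ y) :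
    discrepancy (N + 1) y = discrepancy N y - 1 := by
  rw [discrepancy_of_le (by exact_mod_cast h), discrepancy_of_le (by linarith)]
  push_cast
  ring

lemma hasMellin_discrepancy (N : ℕ) {s : ℂ} (hs : 0 < s.re) (hs1 : s.re < 1) :
    HasMellin (fun y => (discrepancy N y : ℂ)) (-s) ((riemannZeta s - zetaPartialSum N s) / s) := by
  induction N with
  | zero =>
    have h := hasMellin_const_smul (hasMellin_fract hs hs1).1 (-1 : ℂ)
    rw [(hasMellin_fract hs hs1).2] at h
    convert! hasMellin_congr_of_ne (g := fun y => (discrepancy 0 y : ℂ)) 0 h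
      fun y hy _ => ?_ using 1
    · simp [zetaPartialSum, neg_div]
    · simp [discrepancy_zero hy.le]
  | succ N ih =>
    have hi := hasMellin_cpow_Ioi (c := N + 1) (by positivity) (a := 0) (s := -s)
      (by simpa using hs)
    have h := hasMellin_sub ih.1 hi.1
    rw [ih.2, hi.2] at h
    convert! hasMellin_congr_of_ne (g := fun y => (discrepancy (N + 1) y : ℂ)) (N + 1) h
      fun y _ hy => ?_ using 1
    · rw [zetaPartialSum, zetaPartialSum, Finset.sum_Icc_succ_top (by omega), add_zero,
        neg_div_neg_eq, ← sub_div, sub_sub]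
      push_cast
      rfl
    · rcases lt_or_gt_of_ne hy with h | h
      · simp [discrepancy_succ_of_lt h, h.le]
      · simp [discrepancy_succ_of_le h.le, h]

/-- The increment of `discrepancy N` under dilation by `k`. -/
noncomputable def discrepancyIncr (N : ℕ) (k y : ℝ) : ℝ := discrepancy N (k * y) - discrepancy N y

@[fun_prop]
lemma measurable_discrepancyIncr (N : ℕ) (k : ℝ) : Measurable (discrepancyIncr N k) := by
  unfold discrepancyIncr
  fun_prop

lemma hasMellin_discrepancyIncr (N : ℕ) (η : ℝ) {s : ℂ} (hs : 0 < s.re) (hs1 : s.re < 1) :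
    HasMellin (fun y => (discrepancyIncr N (Real.exp η) y : ℂ)) (-s)
      ((cexp (η * s) - 1) * ((riemannZeta s - zetaPartialSum N s) / s)) := by
  have h := hasMellin_discrepancy N hs hs1
  have hk := Real.exp_pos η
  have hsub := hasMellin_sub ((MellinConvergent.comp_mul_left hk).mpr h.1) h.1
  rw [mellin_comp_mul_left (fun y => (discrepancy N y : ℂ)) _ hk, h.2, neg_neg,
    cpow_def_of_ne_zero (ofReal_ne_zero.mpr hk.ne'), ← ofReal_log hk.le, Real.log_exp,
    smul_eq_mul, ← sub_one_mul] at hsub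
  simpa only [discrepancyIncr, ofReal_sub] using hsub

lemma discrepancyIncr_of_forall_notMem {N : ℕ} {k y : ℝ} (hk : 1 ≤ k) (hy : 0 ≤ y)
    (h : ∀ n : ℕ, N < n → y < n → k * y < n) : discrepancyIncr N k y = -((k - 1) * y) := by
  have hle : ⌊y⌋₊ ≤ ⌊k * y⌋₊ := Nat.floor_mono (le_mul_of_one_le_left hy hk)
  have hfl : ⌊k * y⌋₊ - N = ⌊y⌋₊ - N := by
    by_contra hne
    refine (h ⌊k * y⌋₊ (by omega) ?_).not_ge (Nat.floor_le (by positivity))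
    exact (Nat.floor_lt hy).mp (by omega)
  rw [discrepancyIncr, discrepancy, discrepancy, hfl]
  ring

lemma abs_discrepancyIncr_le_one {N : ℕ} {k y : ℝ} (hk : 1 ≤ k) (hN : (k - 1) * N ≤ 1)
    (hy : 0 ≤ y) : |discrepancyIncr N k y| ≤ 1 := by
  have hky : y ≤ k * y := le_mul_of_one_le_left hy hk
  rcases le_total (N : ℝ) y with h | h
  · rw [discrepancyIncr, discrepancy_of_le h, discrepancy_of_le (h.trans hky), abs_le]
    have := Int.fract_nonneg y
    have := Int.fract_nonneg (k * y)
    have := (Int.fract_lt_one y).le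
    have := (Int.fract_lt_one (k * y)).le
    constructor <;> linarith
  · have hstep : (k - 1) * y ≤ 1 := (mul_le_mul_of_nonneg_left h (by linarith)).trans hN
    have hle : ⌊y⌋₊ ≤ ⌊k * y⌋₊ := Nat.floor_mono hky
    have hle' : ⌊k * y⌋₊ ≤ ⌊y⌋₊ + 1 := by
      rw [← Nat.floor_add_one hy]
      exact Nat.floor_mono (by linarith)
    have h0 : ((⌊y⌋₊ - N : ℕ) : ℝ) ≤ (⌊k * y⌋₊ - N : ℕ) := by exact_mod_cast by omega
    have h1 : ((⌊k * y⌋₊ - N : ℕ) : ℝ) ≤ (⌊y⌋₊ - N : ℕ) + 1 := by exact_mod_cast by omega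
    have := mul_nonneg (sub_nonneg.mpr hk) hy
    rw [discrepancyIncr, discrepancy, discrepancy, abs_le]
    constructor <;> linarith

/-- The set of `y` such that `(y, k y]` contains an integer exceeding `N`. -/
def jumpSet (N : ℕ) (k : ℝ) : Set ℝ :=
  ⋃ n : ℕ, Set.Ico (((n + (N + 1) : ℕ) : ℝ) / k) (n + (N + 1) : ℕ)

lemma discrepancyIncr_sq_le {N : ℕ} {k y : ℝ} (hk : 1 ≤ k) (hN : (k - 1) * N ≤ 1)
    (hy : 0 ≤ y) : discrepancyIncr N k y ^ 2 ≤
      min (((k - 1) * y) ^ 2) 1 + (jumpSet N k).indicator 1 y := by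
  have h1 := (sq_le_one_iff_abs_le_one _).mpr (abs_discrepancyIncr_le_one hk hN hy)
  by_cases h : y ∈ jumpSet N k
  · rw [Set.indicator_of_mem h, Pi.one_apply]
    exact h1.trans (le_add_of_nonneg_left (by positivity))
  · rw [Set.indicator_of_notMem h, add_zero, le_min_iff]
    refine ⟨?_, h1⟩
    rw [discrepancyIncr_of_forall_notMem hk hy fun n hn hyn => ?_, neg_sq]
    contrapose! h
    refine Set.mem_iUnion.mpr ⟨n - (N + 1), ?_⟩
    rw [Nat.sub_add_cancel hn, Set.mem_Ico, div_le_iff₀' (by linarith)]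
    exact ⟨h, hyn⟩

end Discrepancy

section WeightedL2

/-- The tail `∑_{n > N} n⁻ˣ`. -/
noncomputable def rpowTail (N : ℕ) (x : ℝ) : ℝ := ∑' n : ℕ, ((n + (N + 1) : ℕ) : ℝ) ^ (-x)

lemma summable_rpowTail (N : ℕ) {x : ℝ} (hx : 1 < x) :
    Summable fun n : ℕ => ((n + (N + 1) : ℕ) : ℝ) ^ (-x) :=
  (summable_nat_add_iff (N + 1)).mpr (Real.summable_nat_rpow.mpr (neg_lt_neg hx))

lemma rpowTail_anti (N : ℕ) {x y : ℝ} (hx : 1 < x) (hxy : x ≤ y) : rpowTail N y ≤ rpowTail N x :=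
  (summable_rpowTail N (hx.trans_le hxy)).tsum_le_tsum (fun n => Real.rpow_le_rpow_of_exponent_le
    (Nat.one_le_cast.mpr (by omega)) (neg_le_neg hxy)) (summable_rpowTail N hx)

lemma tendsto_rpowTail (x : ℝ) : Tendsto (fun N => rpowTail N x) atTop (𝓝 0) :=
  (tendsto_sum_nat_add fun n : ℕ => (n : ℝ) ^ (-x)).comp (tendsto_add_atTop_nat 1)

lemma lintegral_Ioc_zero_rpow {c r : ℝ} (hc : 0 ≤ c) (hr : -1 < r) :
    ∫⁻ y in Set.Ioc 0 c, ENNReal.ofReal (y ^ r) = ENNReal.ofReal (c ^ (r + 1) / (r + 1)) := by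
  rw [← ofReal_integral_eq_lintegral_ofReal, ← intervalIntegral.integral_of_le hc,
    integral_rpow (Or.inl hr), Real.zero_rpow (by linarith), sub_zero]
  · exact (intervalIntegrable_iff_integrableOn_Ioc_of_le hc).mp
      (intervalIntegral.intervalIntegrable_rpow' hr)
  · filter_upwards [ae_restrict_mem measurableSet_Ioc] with y hy
    exact Real.rpow_nonneg hy.1.le r

lemma lintegral_Ioi_rpow {c r : ℝ} (hc : 0 < c) (hr : r < -1) :
    ∫⁻ y in Set.Ioi c, ENNReal.ofReal (y ^ r) = ENNReal.ofReal (-c ^ (r + 1) / (r + 1)) := by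
  rw [← ofReal_integral_eq_lintegral_ofReal, integral_Ioi_rpow_of_lt hr hc]
  · exact integrableOn_Ioi_rpow_of_lt hr hc
  · filter_upwards [ae_restrict_mem measurableSet_Ioi] with y hy
    exact Real.rpow_nonneg (hc.trans hy).le r

variable {σ : ℝ}

lemma lintegral_Ioc_rpow_mul_sq {β : ℝ} (hβ : 0 < β) (hσ1 : σ < 1) :
    ∫⁻ y in Set.Ioc 0 β⁻¹, ENNReal.ofReal (y ^ (2 * -σ - 1) * (β * y) ^ 2) =
      ENNReal.ofReal (β ^ (2 * σ) * (1 / (2 - 2 * σ))) := calc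
  _ = ∫⁻ y in Set.Ioc 0 β⁻¹, ENNReal.ofReal (β ^ 2) * ENNReal.ofReal (y ^ (1 - 2 * σ)) := by
    refine setLIntegral_congr_fun measurableSet_Ioc fun y hy => ?_
    have h : y ^ (1 - 2 * σ) = y ^ (2 * -σ - 1) * y ^ 2 := by
      rw [← Real.rpow_natCast, ← Real.rpow_add hy.1]
      congr 1
      push_cast
      ring
    rw [← ENNReal.ofReal_mul (sq_nonneg β), h, mul_left_comm, ← mul_pow]
  _ = ENNReal.ofReal (β ^ (2 * σ) * (1 / (2 - 2 * σ))) := by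
    rw [lintegral_const_mul _ (by fun_prop), lintegral_Ioc_zero_rpow (by positivity)
      (by linarith), ← ENNReal.ofReal_mul (sq_nonneg β), Real.inv_rpow hβ.le,
      ← Real.rpow_neg hβ.le, ← mul_div_assoc, ← Real.rpow_natCast, ← Real.rpow_add hβ, mul_one_div,
      show 1 - 2 * σ + 1 = 2 - 2 * σ by ring]
    congr 3
    push_cast
    ring

lemma lintegral_rpow_mul_min_le {β : ℝ} (hβ : 0 < β) (hσ : 0 < σ) (hσ1 : σ < 1) :
    ∫⁻ y in Set.Ioi 0, ENNReal.ofReal (y ^ (2 * -σ - 1) * min ((β * y) ^ 2) 1) ≤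
      ENNReal.ofReal (β ^ (2 * σ) * (1 / (2 - 2 * σ) + 1 / (2 * σ))) := by
  have hlow : ∫⁻ y in Set.Ioc 0 β⁻¹, ENNReal.ofReal (y ^ (2 * -σ - 1) * min ((β * y) ^ 2) 1) ≤
      ENNReal.ofReal (β ^ (2 * σ) * (1 / (2 - 2 * σ))) := by
    rw [← lintegral_Ioc_rpow_mul_sq hβ hσ1]
    refine setLIntegral_mono (by fun_prop) fun y hy => ENNReal.ofReal_le_ofReal ?_
    exact mul_le_mul_of_nonneg_left (min_le_left _ _) (Real.rpow_nonneg hy.1.le _)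
  have hhigh : ∫⁻ y in Set.Ioi β⁻¹, ENNReal.ofReal (y ^ (2 * -σ - 1) * min ((β * y) ^ 2) 1) ≤
      ENNReal.ofReal (β ^ (2 * σ) * (1 / (2 * σ))) := calc
    _ ≤ ∫⁻ y in Set.Ioi β⁻¹, ENNReal.ofReal (y ^ (2 * -σ - 1)) := by
      refine setLIntegral_mono (by fun_prop) fun y hy => ENNReal.ofReal_le_ofReal ?_
      exact mul_le_of_le_one_right (Real.rpow_nonneg ((inv_pos.mpr hβ).trans hy).le _)
        (min_le_right _ _)
    _ = ENNReal.ofReal (β ^ (2 * σ) * (1 / (2 * σ))) := by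
      rw [lintegral_Ioi_rpow (by positivity) (by linarith), Real.inv_rpow hβ.le,
        ← Real.rpow_neg hβ.le, mul_one_div, neg_div, ← div_neg]
      congr 3 <;> ring
  have hβσ := Real.rpow_nonneg hβ.le (2 * σ)
  rw [← Set.Ioc_union_Ioi_eq_Ioi (inv_pos.mpr hβ).le, mul_add,
    ENNReal.ofReal_add (mul_nonneg hβσ (one_div_nonneg.mpr (by linarith))) (by positivity)]
  exact (lintegral_union_le _ _ _).trans (add_le_add hlow hhigh)

lemma lintegral_Ico_rpow_le {k m : ℝ} (hk : 1 ≤ k) (hk2 : k ≤ 2) (hm : 0 < m) (hσ : 0 < σ)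
    (hσ1 : σ ≤ 1) :
    ∫⁻ y in Set.Ico (m / k) m, ENNReal.ofReal (y ^ (2 * -σ - 1)) ≤
      ENNReal.ofReal (4 * (k - 1) * m ^ (-(2 * σ))) := by
  have hk0 : 0 < k := one_pos.trans_le hk
  have hq : 0 < m / k := by positivity
  have hkσ : k ^ (2 * σ) ≤ 4 := calc
    k ^ (2 * σ) ≤ k ^ (2 : ℝ) := Real.rpow_le_rpow_of_exponent_le hk (by linarith)
    _ ≤ 2 ^ (2 : ℝ) := Real.rpow_le_rpow hk0.le hk2 two_pos.le
    _ = 4 := by norm_num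
  calc ∫⁻ y in Set.Ico (m / k) m, ENNReal.ofReal (y ^ (2 * -σ - 1))
      ≤ ∫⁻ _ in Set.Ico (m / k) m, ENNReal.ofReal ((m / k) ^ (2 * -σ - 1)) :=
        setLIntegral_mono (by fun_prop) fun y hy => ENNReal.ofReal_le_ofReal
          (Real.rpow_le_rpow_of_nonpos hq hy.1 (by linarith))
    _ = ENNReal.ofReal ((m / k) ^ (2 * -σ - 1) * (m / k * (k - 1))) := by
        rw [setLIntegral_const, Real.volume_Ico,
          ← ENNReal.ofReal_mul (Real.rpow_nonneg hq.le _)]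
        congr 2
        field_simp
    _ = ENNReal.ofReal (k ^ (2 * σ) * (k - 1) * m ^ (-(2 * σ))) := by
        rw [← mul_assoc, ← Real.rpow_add_one hq.ne', sub_add_cancel, mul_neg,
          Real.div_rpow hm.le hk0.le, Real.rpow_neg hk0.le, div_inv_eq_mul]
        congr 1
        ring
    _ ≤ ENNReal.ofReal (4 * (k - 1) * m ^ (-(2 * σ))) := by
        have := sub_nonneg.mpr hk
        gcongr

lemma measurableSet_jumpSet (N : ℕ) (k : ℝ) : MeasurableSet (jumpSet N k) :=
  .iUnion fun _ => measurableSet_Ico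

lemma lintegral_jumpSet_rpow_le (N : ℕ) {k : ℝ} (hk : 1 ≤ k) (hk2 : k ≤ 2) (hσ : 1 / 2 < σ)
    (hσ1 : σ ≤ 1) :
    ∫⁻ y in jumpSet N k, ENNReal.ofReal (y ^ (2 * -σ - 1)) ≤
      ENNReal.ofReal (4 * (k - 1) * rpowTail N (2 * σ)) := by
  have : 0 ≤ k - 1 := sub_nonneg.mpr hk
  rw [rpowTail, ← tsum_mul_left, ENNReal.ofReal_tsum_of_nonneg (fun n => by positivity)
    ((summable_rpowTail N (by linarith)).mul_left _)]
  exact (lintegral_iUnion_le _ _).trans (ENNReal.tsum_le_tsum fun n =>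
    lintegral_Ico_rpow_le hk hk2 (by positivity) (by linarith) hσ1)

lemma lintegral_rpow_mul_discrepancyIncr_sq_le {N : ℕ} {k : ℝ} (hk : 1 < k) (hk2 : k ≤ 2)
    (hN : (k - 1) * N ≤ 1) (hσ : 1 / 2 < σ) (hσ1 : σ < 1) :
    ∫⁻ y in Set.Ioi 0, ENNReal.ofReal (y ^ (2 * -σ - 1) * discrepancyIncr N k y ^ 2) ≤
      ENNReal.ofReal ((k - 1) ^ (2 * σ) * (1 / (2 - 2 * σ) + 1 / (2 * σ)) +
        4 * (k - 1) * rpowTail N (2 * σ)) := by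
  have hk1 := sub_pos.mpr hk
  have : 0 ≤ (k - 1) ^ (2 * σ) := Real.rpow_nonneg hk1.le _
  have h2σ := one_div_pos.mpr (show 0 < 2 - 2 * σ by linarith)
  have htail : 0 ≤ rpowTail N (2 * σ) := tsum_nonneg fun n => by positivity
  calc ∫⁻ y in Set.Ioi 0, ENNReal.ofReal (y ^ (2 * -σ - 1) * discrepancyIncr N k y ^ 2)
      ≤ ∫⁻ y in Set.Ioi 0, (ENNReal.ofReal (y ^ (2 * -σ - 1) * min (((k - 1) * y) ^ 2) 1) +
          (jumpSet N k).indicator (fun y => ENNReal.ofReal (y ^ (2 * -σ - 1))) y) := by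
        refine setLIntegral_mono' measurableSet_Ioi fun y (hy : 0 < y) => ?_
        have hD := discrepancyIncr_sq_le hk.le hN hy.le
        have hw := Real.rpow_nonneg hy.le (2 * -σ - 1)
        by_cases hJ : y ∈ jumpSet N k
        · rw [Set.indicator_of_mem hJ] at hD ⊢
          rw [← ENNReal.ofReal_add (by positivity) hw, ← mul_add_one]
          gcongr
          exact hD
        · rw [Set.indicator_of_notMem hJ, add_zero] at hD ⊢
          gcongr
    _ = (∫⁻ y in Set.Ioi 0, ENNReal.ofReal (y ^ (2 * -σ - 1) * min (((k - 1) * y) ^ 2) 1)) +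
        ∫⁻ y in jumpSet N k ∩ Set.Ioi 0, ENNReal.ofReal (y ^ (2 * -σ - 1)) := by
        rw [lintegral_add_left (by fun_prop), setLIntegral_indicator (measurableSet_jumpSet N k)]
    _ ≤ _ := by
        rw [ENNReal.ofReal_add (by positivity) (by positivity)]
        exact add_le_add (lintegral_rpow_mul_min_le hk1 (by linarith) hσ1)
          ((lintegral_mono_set Set.inter_subset_left).trans
            (lintegral_jumpSet_rpow_le N hk.le hk2 hσ hσ1.le))

end WeightedL2

section MeanSquare

lemma integrable_and_integral_le_of_lintegral_le {α : Type*} [MeasurableSpace α] {μ : Measure α}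
    {g : α → ℝ} {c : ℝ} (hg : AEStronglyMeasurable g μ) (hg0 : 0 ≤ᵐ[μ] g) (hc : 0 ≤ c)
    (h : ∫⁻ x, ENNReal.ofReal (g x) ∂μ ≤ ENNReal.ofReal c) :
    Integrable g μ ∧ ∫ x, g x ∂μ ≤ c := by
  refine ⟨⟨hg, (hasFiniteIntegral_iff_ofReal hg0).mpr (h.trans_lt ENNReal.ofReal_lt_top)⟩, ?_⟩
  rw [integral_eq_lintegral_of_nonneg_ae hg0 hg]
  exact ENNReal.toReal_le_of_le_ofReal hc h

variable {σ : ℝ}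

lemma integrableOn_and_integral_discrepancyIncr_sq_le {N : ℕ} {η : ℝ} (hη : 0 < η)
    (hη2 : η ≤ 1 / 2) (hN : 2 * η * N ≤ 1) (hσ : 1 / 2 < σ) (hσ1 : σ < 1) :
    IntegrableOn (fun y => y ^ (2 * -σ - 1) • ‖(discrepancyIncr N (Real.exp η) y : ℂ)‖ ^ 2)
      (Set.Ioi 0) ∧
    ∫ y in Set.Ioi 0, y ^ (2 * -σ - 1) • ‖(discrepancyIncr N (Real.exp η) y : ℂ)‖ ^ 2 ≤
      (2 * η) ^ (2 * σ) * (1 / (2 - 2 * σ) + 1 / (2 * σ)) + 8 * η * rpowTail N (2 * σ) := by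
  have hk := Real.abs_exp_sub_one_le (x := η) (by rw [abs_of_pos hη]; linarith)
  have hk1 : 1 < Real.exp η := Real.one_lt_exp_iff.mpr hη
  rw [abs_of_pos hη, abs_of_pos (sub_pos.mpr hk1)] at hk
  have hA : 0 < 1 / (2 - 2 * σ) + 1 / (2 * σ) :=
    add_pos (one_div_pos.mpr (by linarith)) (one_div_pos.mpr (by linarith))
  have htail : 0 ≤ rpowTail N (2 * σ) := tsum_nonneg fun n => by positivity
  simp only [norm_real, Real.norm_eq_abs, sq_abs, smul_eq_mul]
  refine integrable_and_integral_le_of_lintegral_le (by fun_prop) ?_ (by positivity)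
    ((lintegral_rpow_mul_discrepancyIncr_sq_le hk1 (by linarith) ?_ hσ hσ1).trans
      (ENNReal.ofReal_le_ofReal ?_))
  · filter_upwards [ae_restrict_mem measurableSet_Ioi] with y (hy : 0 < y)
    positivity
  · exact (mul_le_mul_of_nonneg_right hk N.cast_nonneg).trans hN
  · refine add_le_add (mul_le_mul_of_nonneg_right ?_ hA.le)
      (mul_le_mul_of_nonneg_right (by linarith) htail)
    exact Real.rpow_le_rpow (sub_nonneg.mpr hk1.le) hk (by linarith)

lemma integrable_and_integral_norm_exp_sub_one_mul_zeta_sq_le {N : ℕ} {η : ℝ} (hη : 0 < η)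
    (hη2 : η ≤ 1 / 2) (hN : 2 * η * N ≤ 1) (hσ : 1 / 2 < σ) (hσ1 : σ < 1) :
    Integrable (fun t : ℝ => ‖(cexp (η * (σ + t * I)) - 1) *
      ((riemannZeta (σ + t * I) - zetaPartialSum N (σ + t * I)) / (σ + t * I))‖ ^ 2) ∧
    ∫ t : ℝ, ‖(cexp (η * (σ + t * I)) - 1) *
      ((riemannZeta (σ + t * I) - zetaPartialSum N (σ + t * I)) / (σ + t * I))‖ ^ 2 ≤
      2 * Real.pi * ((2 * η) ^ (2 * σ) * (1 / (2 - 2 * σ) + 1 / (2 * σ)) +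
        8 * η * rpowTail N (2 * σ)) := by
  have hmellin (t : ℝ) := hasMellin_discrepancyIncr N η (s := σ + t * I)
    (by simpa using by linarith) (by simpa using hσ1)
  have heq (t : ℝ) : (cexp (η * (σ + t * I)) - 1) *
      ((riemannZeta (σ + t * I) - zetaPartialSum N (σ + t * I)) / (σ + t * I)) =
      mellin (fun y => (discrepancyIncr N (Real.exp η) y : ℂ)) ((-σ : ℝ) + (-t : ℝ) * I) := by
    rw [← (hmellin t).2]
    congr 1
    push_cast
    ring
  have hconv : MellinConvergent (fun y => (discrepancyIncr N (Real.exp η) y : ℂ)) (-σ : ℝ) := by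
    simpa using (hmellin 0).1
  obtain ⟨hint, hle⟩ := integrableOn_and_integral_discrepancyIncr_sq_le hη hη2 hN hσ hσ1
  simp only [heq]
  refine ⟨(integrable_norm_mellin_vertical_sq hconv hint).comp_neg, ?_⟩
  rw [integral_neg_eq_self fun t : ℝ => ‖mellin _ ((-σ : ℝ) + t * I)‖ ^ 2,
    integral_norm_mellin_vertical_sq hconv hint]
  gcongr

lemma norm_div_two_le_norm_exp_sub_one {z : ℂ} (hz : ‖z‖ ≤ 1 / 2) :
    ‖z‖ / 2 ≤ ‖cexp z - 1‖ := by
  have h := norm_exp_sub_one_sub_id_le (hz.trans (by norm_num))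
  have h' := norm_sub_norm_le z (cexp z - 1)
  rw [norm_sub_rev z] at h'
  nlinarith [norm_nonneg z]

lemma norm_sq_le_mul_norm_exp_sub_one_mul_div_sq {η : ℝ} (hη : 0 < η) {s w : ℂ} (hs : s ≠ 0)
    (hηs : η * ‖s‖ ≤ 1 / 2) :
    ‖w‖ ^ 2 ≤ 4 / η ^ 2 * ‖(cexp (η * s) - 1) * (w / s)‖ ^ 2 := by
  have hnorm : ‖(η * s : ℂ)‖ = η * ‖s‖ := by rw [norm_mul, norm_real, Real.norm_of_nonneg hη.le]
  have hexp := norm_div_two_le_norm_exp_sub_one (z := η * s) (hnorm.trans_le hηs)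
  rw [hnorm] at hexp
  have : 0 < ‖s‖ := norm_pos_iff.mpr hs
  calc ‖w‖ ^ 2 = 4 / η ^ 2 * (η * ‖s‖ / 2 * (‖w‖ / ‖s‖)) ^ 2 := by field_simp; norm_num
    _ ≤ 4 / η ^ 2 * (‖cexp (η * s) - 1‖ * (‖w‖ / ‖s‖)) ^ 2 := by gcongr
    _ = _ := by rw [norm_mul, norm_div]

lemma continuous_zeta_sub_zetaPartialSum_vertical (N : ℕ) (hσ1 : σ ≠ 1) :
    Continuous fun t : ℝ => riemannZeta (σ + t * I) - zetaPartialSum N (σ + t * I) := by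
  have hne (t : ℝ) : (σ + t * I : ℂ) ≠ 1 := fun h => hσ1 (by simpa using congrArg re h)
  refine .sub (continuous_iff_continuousAt.mpr fun t => ?_) ?_
  · exact ContinuousAt.comp (f := fun t : ℝ => (σ + t * I : ℂ))
      (differentiableAt_riemannZeta (hne t)).continuousAt
      (by fun_prop : Continuous fun t : ℝ => (σ + t * I : ℂ)).continuousAt
  · refine continuous_finsetSum _ fun n hn => Continuous.const_cpow (by fun_prop) (.inl ?_)
    exact Nat.cast_ne_zero.mpr (by grind)

lemma norm_ofReal_add_mul_I_le {t T : ℝ} (hσ : 0 ≤ σ) (ht : |t| ≤ T) :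
    ‖(σ + t * I : ℂ)‖ ≤ T + σ := by
  refine (norm_add_le _ _).trans ?_
  rw [norm_mul, norm_I, mul_one, norm_real, norm_real, Real.norm_of_nonneg hσ, Real.norm_eq_abs]
  linarith

lemma rpow_two_sub_eq_sq_mul_inv_rpow {x : ℝ} (hx : 0 < x) (y : ℝ) :
    x ^ (2 - y) = x ^ 2 * x⁻¹ ^ y := by
  rw [Real.inv_rpow hx.le, Real.rpow_sub hx, div_eq_mul_inv, Real.rpow_two]

-- The smoothing scale `η = 1 / (2 (T + 1))` makes `|exp (η s) - 1|` comparable to `η |s|`.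
theorem integral_norm_zeta_sub_zetaPartialSum_sq_le {N : ℕ} {T : ℝ} (hT : 0 ≤ T) (hN : N ≤ T)
    (hσ : 1 / 2 < σ) (hσ1 : σ < 1) :
    ∫ t in (-T)..T, ‖riemannZeta (σ + t * I) - zetaPartialSum N (σ + t * I)‖ ^ 2 ≤
      32 * Real.pi * ((1 / (2 - 2 * σ) + 1 / (2 * σ)) * (T + 1) ^ (2 - 2 * σ) +
        4 * rpowTail N (2 * σ) * (T + 1)) := by
  set η := (2 * (T + 1))⁻¹ with hηdef
  have hη : 0 < η := by positivity
  have hηT : 2 * η = (T + 1)⁻¹ := by rw [hηdef]; field_simp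
  have hηT' : 2 * η * (T + 1) = 1 := by rw [hηT]; field_simp
  obtain ⟨hint, hle⟩ := integrable_and_integral_norm_exp_sub_one_mul_zeta_sq_le (N := N) hη
    (by nlinarith) (by nlinarith) hσ hσ1
  set G : ℝ → ℝ := fun t => ‖(cexp (η * (σ + t * I)) - 1) *
      ((riemannZeta (σ + t * I) - zetaPartialSum N (σ + t * I)) / (σ + t * I))‖ ^ 2
  have hpt : ∀ t ∈ Set.Icc (-T) T,
      ‖riemannZeta (σ + t * I) - zetaPartialSum N (σ + t * I)‖ ^ 2 ≤ 4 / η ^ 2 * G t := by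
    intro t ht
    have hs0 : (σ + t * I : ℂ) ≠ 0 := ne_zero_of_re_pos (by simpa using by linarith)
    have hs := norm_ofReal_add_mul_I_le (σ := σ) (by linarith) (abs_le.mpr ht)
    exact norm_sq_le_mul_norm_exp_sub_one_mul_div_sq hη hs0 (by nlinarith)
  calc ∫ t in (-T)..T, ‖riemannZeta (σ + t * I) - zetaPartialSum N (σ + t * I)‖ ^ 2
      ≤ ∫ t in (-T)..T, 4 / η ^ 2 * G t :=
        intervalIntegral.integral_mono_on (by linarith)
          (((continuous_zeta_sub_zetaPartialSum_vertical N hσ1.ne).norm.pow 2).intervalIntegrable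
            _ _) (hint.const_mul _).intervalIntegrable hpt
    _ = 4 / η ^ 2 * ∫ t in (-T)..T, G t := intervalIntegral.integral_const_mul _ _
    _ ≤ 4 / η ^ 2 * (2 * Real.pi * ((2 * η) ^ (2 * σ) * (1 / (2 - 2 * σ) + 1 / (2 * σ)) +
        8 * η * rpowTail N (2 * σ))) := by
      gcongr
      rw [intervalIntegral.integral_of_le (by linarith)]
      exact (setIntegral_le_integral hint (.of_forall fun t => sq_nonneg _)).trans hle
    _ = 32 * Real.pi * ((1 / (2 - 2 * σ) + 1 / (2 * σ)) * (T + 1) ^ (2 - 2 * σ) +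
        4 * rpowTail N (2 * σ) * (T + 1)) := by
      rw [rpow_two_sub_eq_sq_mul_inv_rpow (by positivity), ← hηT, hηdef]
      generalize (2 * (2 * (T + 1))⁻¹) ^ (2 * σ) = x
      generalize 1 / (2 - 2 * σ) + 1 / (2 * σ) = y
      field_simp
      ring

lemma eventually_mul_rpow_le {x δ : ℝ} (hx : x < 1) (hδ : 0 < δ) (c : ℝ) :
    ∀ᶠ T : ℝ in atTop, c * T ^ x ≤ δ * T := by
  have h : Tendsto (fun T : ℝ => c * T ^ (-(1 - x))) atTop (𝓝 0) := by
    simpa using (tendsto_rpow_neg_atTop (sub_pos.mpr hx)).const_mul c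
  filter_upwards [h.eventually (ge_mem_nhds hδ), eventually_gt_atTop 0] with T hT hT0
  calc c * T ^ x = c * T ^ (-(1 - x)) * T := by
        rw [mul_assoc, ← Real.rpow_add_one hT0.ne', neg_sub, sub_add_cancel]
    _ ≤ δ * T := by gcongr

lemma exists_eventually_integral_norm_zeta_sub_zetaPartialSum_sq_le {a b δ : ℝ} (ha : 1 / 2 < a)
    (hb : b < 1) (hδ : 0 < δ) :
    ∃ N : ℕ, ∀ᶠ T : ℝ in atTop, ∀ σ ∈ Set.Icc a b,
      ∫ t in (-T)..T, ‖riemannZeta (σ + t * I) - zetaPartialSum N (σ + t * I)‖ ^ 2 ≤ δ * T := by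
  obtain ⟨N, hN⟩ := ((tendsto_rpowTail (2 * a)).eventually
    (ge_mem_nhds (show 0 < δ / (512 * Real.pi) by positivity))).exists
  have hpow := (tendsto_atTop_add_const_right atTop (1 : ℝ) tendsto_id).eventually
    (eventually_mul_rpow_le (show 2 - 2 * a < 1 by linarith) (show 0 < δ / 4 by positivity)
      (32 * Real.pi * (1 / (2 - 2 * b) + 1)))
  refine ⟨N, ?_⟩
  filter_upwards [hpow, eventually_ge_atTop 1, eventually_ge_atTop (N : ℝ)] with T hT hT1 hTN σ hσ
  simp only [id] at hT
  have hσ1 : σ < 1 := hσ.2.trans_lt hb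
  have hσ2 : 1 / 2 < σ := ha.trans_le hσ.1
  have hb' : 0 < 2 - 2 * b := by linarith
  have htail : rpowTail N (2 * σ) ≤ δ / (512 * Real.pi) :=
    (rpowTail_anti N (by linarith) (by linarith [hσ.1])).trans hN
  calc ∫ t in (-T)..T, ‖riemannZeta (σ + t * I) - zetaPartialSum N (σ + t * I)‖ ^ 2
      ≤ 32 * Real.pi * ((1 / (2 - 2 * σ) + 1 / (2 * σ)) * (T + 1) ^ (2 - 2 * σ) +
        4 * rpowTail N (2 * σ) * (T + 1)) :=
        integral_norm_zeta_sub_zetaPartialSum_sq_le (by linarith) hTN hσ2 hσ1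
    _ ≤ 32 * Real.pi * ((1 / (2 - 2 * b) + 1) * (T + 1) ^ (2 - 2 * a) +
        4 * (δ / (512 * Real.pi)) * (T + 1)) := by
      gcongr
      · exact hσ.2
      · rw [div_le_one (by linarith)]
        linarith
      · linarith
      · exact hσ.1
    _ = 32 * Real.pi * (1 / (2 - 2 * b) + 1) * (T + 1) ^ (2 - 2 * a) + δ / 4 * (T + 1) := by
      field_simp
      ring
    _ ≤ δ * T := by nlinarith

lemma integral_le_of_integral_sq_le {g : ℝ → ℝ} (hg : Continuous g) {δ T : ℝ} (hδ : 0 < δ)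
    (hT : 0 ≤ T) (h : ∫ t in (-T)..T, g t ^ 2 ≤ δ ^ 2 / 2 * T) : ∫ t in (-T)..T, g t ≤ δ * T := by
  have hsq : Continuous fun t => δ⁻¹ * g t ^ 2 := (hg.pow 2).const_mul _
  calc ∫ t in (-T)..T, g t ≤ ∫ t in (-T)..T, (δ⁻¹ * g t ^ 2 + δ / 4) := by
        refine intervalIntegral.integral_mono_on (by linarith) (hg.intervalIntegrable _ _)
          ((hsq.add continuous_const).intervalIntegrable _ _) fun t _ => ?_
        have : δ⁻¹ * g t ^ 2 + δ / 4 - g t = δ⁻¹ * (g t - δ / 2) ^ 2 := by field_simp; ring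
        linarith [show 0 ≤ δ⁻¹ * (g t - δ / 2) ^ 2 by positivity]
    _ = δ⁻¹ * (∫ t in (-T)..T, g t ^ 2) + δ / 2 * T := by
      rw [intervalIntegral.integral_add (hsq.intervalIntegrable _ _)
        (continuous_const.intervalIntegrable _ _), intervalIntegral.integral_const_mul,
        intervalIntegral.integral_const, smul_eq_mul]
      ring
    _ ≤ δ⁻¹ * (δ ^ 2 / 2 * T) + δ / 2 * T := by gcongr
    _ = δ * T := by field_simp; ring

theorem exists_eventually_integral_norm_zeta_sub_zetaPartialSum_le {a b δ : ℝ} (ha : 1 / 2 < a)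
    (hb : b < 1) (hδ : 0 < δ) :
    ∃ N : ℕ, ∀ᶠ T : ℝ in atTop, ∀ σ ∈ Set.Icc a b,
      ∫ t in (-T)..T, ‖riemannZeta (σ + t * I) - zetaPartialSum N (σ + t * I)‖ ≤ δ * T := by
  obtain ⟨N, hN⟩ := exists_eventually_integral_norm_zeta_sub_zetaPartialSum_sq_le ha hb
    (show 0 < δ ^ 2 / 2 by positivity)
  refine ⟨N, ?_⟩
  filter_upwards [hN, eventually_ge_atTop 0] with T hT hT0 σ hσ
  exact integral_le_of_integral_sq_le (continuous_zeta_sub_zetaPartialSum_vertical N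
    (hσ.2.trans_lt hb).ne).norm hδ hT0 (hT σ hσ)

end MeanSquare

section SupBound

variable {E : Type*} [NormedAddCommGroup E] [NormedSpace ℂ E] [CompleteSpace E]

lemma two_pi_mul_enorm_le_lintegral_circleMap {f : ℂ → E} {c : ℂ} {ρ r : ℝ}
    (hf : DifferentiableOn ℂ f (Metric.ball c r)) (hρ : 0 ≤ ρ) (hρr : ρ < r) :
    ENNReal.ofReal (2 * Real.pi) * ‖f c‖ₑ ≤
      ∫⁻ θ in Set.Ioo (-Real.pi) Real.pi, ‖f (circleMap c ρ θ)‖ₑ := by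
  have hdiff : DiffContOnCl ℂ f (Metric.ball c |ρ|) :=
    hf.diffContOnCl_ball (by simpa [abs_of_nonneg hρ] using Metric.closedBall_subset_ball hρr)
  have hmean : (2 * Real.pi) • f c = ∫ θ in Set.Ioo (-Real.pi) Real.pi, f (circleMap c ρ θ) := by
    have hper := ((periodic_circleMap c ρ).comp f).intervalIntegral_add_eq 0 (-Real.pi)
    rw [zero_add, show -Real.pi + 2 * Real.pi = Real.pi by ring] at hper
    rw [← hdiff.circleAverage, Real.circleAverage_def, smul_inv_smul₀ (by positivity),
      ← integral_Ioc_eq_integral_Ioo, ← intervalIntegral.integral_of_le (by linarith [Real.pi_pos])]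
    exact hper
  calc ENNReal.ofReal (2 * Real.pi) * ‖f c‖ₑ = ‖(2 * Real.pi) • f c‖ₑ := by
        rw [enorm_smul, Real.enorm_of_nonneg (by positivity)]
    _ ≤ _ := by rw [hmean]; exact enorm_integral_le_lintegral_enorm _

lemma setLIntegral_ball_eq_lintegral_circleMap {g : ℂ → ℝ≥0∞} {c : ℂ} {r : ℝ}
    (hg : ContinuousOn g (Metric.ball c r)) :
    ∫⁻ z in Metric.ball c r, g z = ∫⁻ ρ in Set.Ioo 0 r,
      ENNReal.ofReal ρ * ∫⁻ θ in Set.Ioo (-Real.pi) Real.pi, g (circleMap c ρ θ) := by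
  classical
  set h := (Metric.ball c r).indicator g
  have hh : Measurable h := by
    rw [show h = _ from Set.piecewise_eq_indicator.symm]
    exact hg.measurable_piecewise continuousOn_const measurableSet_ball
  have : Measurable fun p : ℝ × ℝ => h (circleMap c p.1 p.2) := by
    unfold circleMap
    fun_prop
  calc ∫⁻ z in Metric.ball c r, g z = ∫⁻ z, h (c + z) := by
        rw [lintegral_add_left_eq_self, lintegral_indicator measurableSet_ball]
    _ = ∫⁻ p in Set.Ioi 0 ×ˢ Set.Ioo (-Real.pi) Real.pi,
        ENNReal.ofReal p.1 * h (circleMap c p.1 p.2) := by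
      rw [← Complex.lintegral_comp_polarCoord_symm]
      simp [polarCoord, circleMap, exp_mul_I]
    _ = ∫⁻ ρ in Set.Ioi 0, ENNReal.ofReal ρ *
        ∫⁻ θ in Set.Ioo (-Real.pi) Real.pi, h (circleMap c ρ θ) := by
      rw [Measure.volume_eq_prod, setLIntegral_prod _ (by fun_prop)]
      exact lintegral_congr fun ρ => lintegral_const_mul' _ _ ENNReal.ofReal_ne_top
    _ = ∫⁻ ρ in Set.Ioi 0, (Set.Iio r).indicator (fun ρ => ENNReal.ofReal ρ *
        ∫⁻ θ in Set.Ioo (-Real.pi) Real.pi, g (circleMap c ρ θ)) ρ := by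
      refine setLIntegral_congr_fun measurableSet_Ioi fun ρ (hρ : 0 < ρ) => ?_
      have hmem (θ : ℝ) : circleMap c ρ θ ∈ Metric.ball c r ↔ ρ < r := by
        simp [dist_eq_norm, circleMap, abs_of_pos hρ]
      by_cases h_lt : ρ < r <;> simp [h, Set.indicator, hmem, h_lt]
    _ = _ := by
      rw [lintegral_indicator measurableSet_Iio, Measure.restrict_restrict measurableSet_Iio,
        Set.inter_comm, Set.Ioi_inter_Iio]

theorem volume_ball_mul_enorm_le_lintegral {f : ℂ → E} {c : ℂ} {r : ℝ}
    (hf : DifferentiableOn ℂ f (Metric.ball c r)) :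
    volume (Metric.ball c r) * ‖f c‖ₑ ≤ ∫⁻ z in Metric.ball c r, ‖f z‖ₑ := by
  rw [mul_comm, ← setLIntegral_const, setLIntegral_ball_eq_lintegral_circleMap continuousOn_const,
    setLIntegral_ball_eq_lintegral_circleMap hf.continuousOn.enorm]
  refine setLIntegral_mono' measurableSet_Ioo fun ρ hρ => mul_le_mul_right ?_ _
  rw [setLIntegral_const, Real.volume_Ioo, sub_neg_eq_add, ← two_mul, mul_comm]
  exact two_pi_mul_enorm_le_lintegral_circleMap hf hρ.1.le hρ.2

theorem volume_ball_mul_lintegral_iSup_enorm_le {α : Type*} [MeasurableSpace α] {μ : Measure α}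
    [SFinite μ] {f : α → ℂ → E} {K : Set ℂ} {r : ℝ}
    (hf : ∀ a, DifferentiableOn ℂ (f a) (Metric.thickening r K))
    (hmeas : AEMeasurable (fun p : α × ℂ => ‖f p.1 p.2‖ₑ)
      (μ.prod (volume.restrict (Metric.thickening r K)))) :
    volume (Metric.ball (0 : ℂ) r) * ∫⁻ a, ⨆ s ∈ K, ‖f a s‖ₑ ∂μ ≤
      ∫⁻ z in Metric.thickening r K, ∫⁻ a, ‖f a z‖ₑ ∂μ := by
  rw [← lintegral_const_mul' _ _ measure_ball_lt_top.ne, ← lintegral_lintegral_swap hmeas]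
  refine lintegral_mono fun a => ?_
  simp only [ENNReal.mul_iSup]
  refine iSup₂_le fun s hs => ?_
  have hsub : Metric.ball s r ⊆ Metric.thickening r K := Metric.ball_subset_thickening hs r
  rw [Complex.volume_ball 0, ← Complex.volume_ball s]
  exact (volume_ball_mul_enorm_le_lintegral ((hf a).mono hsub)).trans (lintegral_mono_set hsub)

end SupBound

section ZetaSupBound

lemma measurable_riemannZeta : Measurable riemannZeta :=
  measurable_of_continuousOn_compl_singleton 1 fun _ hs =>
    (differentiableAt_riemannZeta hs).continuousAt.continuousWithinAt

@[fun_prop]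
lemma measurable_zetaPartialSum (N : ℕ) : Measurable (zetaPartialSum N) := by
  unfold zetaPartialSum
  fun_prop

lemma differentiableAt_zeta_sub_zetaPartialSum (N : ℕ) {s : ℂ} (hs : s ≠ 1) :
    DifferentiableAt ℂ (fun s => riemannZeta s - zetaPartialSum N s) s := by
  refine (differentiableAt_riemannZeta hs).sub (.fun_sum fun n hn => ?_)
  exact DifferentiableAt.const_cpow (by fun_prop) (.inl (Nat.cast_ne_zero.mpr (by grind)))

lemma lintegral_enorm_zeta_sub_zetaPartialSum_le {N : ℕ} {z : ℂ} {C T : ℝ} (hz : z.re ≠ 1)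
    (him : |z.im| ≤ T) (hC : ∫ t in (-(2 * T))..(2 * T),
      ‖riemannZeta (z.re + t * I) - zetaPartialSum N (z.re + t * I)‖ ≤ C) :
    ∫⁻ τ in Set.Ioc (-T) T, ‖riemannZeta (z + τ * I) - zetaPartialSum N (z + τ * I)‖ₑ ≤
      ENNReal.ofReal C := by
  set g : ℝ → ℂ := fun t => riemannZeta (z.re + t * I) - zetaPartialSum N (z.re + t * I)
  have hg : Continuous g := continuous_zeta_sub_zetaPartialSum_vertical N hz
  have hT : 0 ≤ T := (abs_nonneg _).trans him
  have hsplit (τ : ℝ) : z + τ * I = z.re + ((τ + z.im : ℝ) : ℂ) * I := by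
    nth_rw 1 [← re_add_im z]
    push_cast
    ring
  simp only [hsplit]
  rw [← ofReal_integral_norm_eq_lintegral_enorm, ← intervalIntegral.integral_of_le (by linarith),
    intervalIntegral.integral_comp_add_right fun t => ‖g t‖]
  · refine ENNReal.ofReal_le_ofReal (le_trans ?_ hC)
    obtain ⟨h₁, h₂⟩ := abs_le.mp him
    exact intervalIntegral.integral_mono_interval (by linarith) (by linarith) (by linarith)
      (.of_forall fun t => norm_nonneg _) (hg.norm.intervalIntegrable _ _)
  · exact ((hg.comp (by fun_prop)).integrableOn_Icc).mono_set Set.Ioc_subset_Icc_self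

lemma exists_re_mem_Icc_of_isCompact {K : Set ℂ} (hK : IsCompact K) (hKs : K ⊆ strip) :
    ∃ a b : ℝ, 1 / 2 < a ∧ b < 1 ∧ ∀ s ∈ K, s.re ∈ Set.Icc a b := by
  rcases K.eq_empty_or_nonempty with rfl | hne
  · exact ⟨3 / 4, 3 / 4, by norm_num, by norm_num, by simp⟩
  · obtain ⟨x, hx, hx'⟩ := hK.exists_isMinOn hne continuous_re.continuousOn
    obtain ⟨y, hy, hy'⟩ := hK.exists_isMaxOn hne continuous_re.continuousOn
    exact ⟨x.re, y.re, (hKs hx).1, (hKs hy).2, fun s hs => ⟨hx' hs, hy' hs⟩⟩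

lemma isOpen_strip : IsOpen strip :=
  (isOpen_lt continuous_const continuous_re).inter (isOpen_lt continuous_re continuous_const)

lemma volume_ball_mul_lintegral_supNorm_zeta_sub_zetaPartialSum_le {K : Set ℂ} {N : ℕ}
    {r C T : ℝ} (hre : ∀ z ∈ Metric.thickening r K, z.re < 1)
    (him : ∀ z ∈ Metric.thickening r K, |z.im| ≤ T)
    (hC : ∀ z ∈ Metric.thickening r K, ∫ t in (-(2 * T))..(2 * T),
      ‖riemannZeta (z.re + t * I) - zetaPartialSum N (z.re + t * I)‖ ≤ C) :
    volume (Metric.ball (0 : ℂ) r) * ∫⁻ τ in Set.Ioc (-T) T,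
        supNorm K (fun s => riemannZeta (s + τ * I) - zetaPartialSum N (s + τ * I)) ≤
      ENNReal.ofReal C * volume (Metric.thickening r K) := by
  have hdiff (τ : ℝ) : DifferentiableOn ℂ
      (fun s => riemannZeta (s + τ * I) - zetaPartialSum N (s + τ * I))
      (Metric.thickening r K) := by
    intro s hs
    have hne : s + τ * I ≠ 1 := fun h => (hre s hs).ne (by simpa using congrArg re h)
    exact ((differentiableAt_zeta_sub_zetaPartialSum N hne).comp s
      (by fun_prop : DifferentiableAt ℂ (fun s => s + τ * I) s)).differentiableWithinAt
  have hmeas : Measurable fun p : ℝ × ℂ =>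
      ‖riemannZeta (p.2 + p.1 * I) - zetaPartialSum N (p.2 + p.1 * I)‖ₑ := by
    have := measurable_riemannZeta
    fun_prop
  refine (volume_ball_mul_lintegral_iSup_enorm_le hdiff hmeas.aemeasurable).trans ?_
  rw [← setLIntegral_const]
  exact setLIntegral_mono' Metric.isOpen_thickening.measurableSet fun z hz =>
    lintegral_enorm_zeta_sub_zetaPartialSum_le (hre z hz).ne (him z hz) (hC z hz)

theorem exists_eventually_lintegral_supNorm_zeta_sub_zetaPartialSum_le {K : Set ℂ}
    (hK : IsCompact K) (hKs : K ⊆ strip) {δ : ℝ} (hδ : 0 < δ) :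
    ∃ N : ℕ, ∀ᶠ T : ℝ in atTop, ∫⁻ τ in Set.Ioc (-T) T,
      supNorm K (fun s => riemannZeta (s + τ * I) - zetaPartialSum N (s + τ * I)) ≤
        ENNReal.ofReal (δ * T) := by
  obtain ⟨r, hr, hrK⟩ := hK.exists_cthickening_subset_open isOpen_strip hKs
  obtain ⟨a, b, ha, hb, hab⟩ := exists_re_mem_Icc_of_isCompact hK.cthickening hrK
  obtain ⟨M, hM⟩ := (hK.cthickening (r := r)).isBounded.exists_norm_le
  have hsub : Metric.thickening r K ⊆ Metric.cthickening r K :=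
    Metric.thickening_subset_cthickening r K
  set V := volume.real (Metric.thickening r K)
  set B := volume.real (Metric.ball (0 : ℂ) r)
  have hV : volume (Metric.thickening r K) = ENNReal.ofReal V := (ofReal_measureReal
    ((measure_mono hsub).trans_lt hK.cthickening.measure_lt_top).ne).symm
  have hB : volume (Metric.ball (0 : ℂ) r) = ENNReal.ofReal B :=
    (ofReal_measureReal measure_ball_lt_top.ne).symm
  have hB₀ := Metric.measure_ball_pos volume (0 : ℂ) hr
  have hB0 : 0 < B := ENNReal.toReal_pos hB₀.ne' measure_ball_lt_top.ne
  have hV0 : 0 ≤ V := measureReal_nonneg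
  obtain ⟨N, hN⟩ := exists_eventually_integral_norm_zeta_sub_zetaPartialSum_le ha hb
    (show 0 < B * δ / (2 * (V + 1)) by positivity)
  refine ⟨N, ?_⟩
  filter_upwards [(tendsto_id.const_mul_atTop (show (0 : ℝ) < 2 by norm_num)).eventually hN,
    eventually_ge_atTop M, eventually_ge_atTop 0] with T hT hTM hT0
  refine (ENNReal.mul_le_mul_iff_right hB₀.ne' measure_ball_lt_top.ne).mp
    ((volume_ball_mul_lintegral_supNorm_zeta_sub_zetaPartialSum_le
      (fun z hz => (hab z (hsub hz)).2.trans_lt hb)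
      (fun z hz => (abs_im_le_norm z).trans ((hM z (hsub hz)).trans hTM))
      (fun z hz => hT _ (hab z (hsub hz)))).trans ?_)
  rw [hB, hV, ← ENNReal.ofReal_mul hB0.le, ← ENNReal.ofReal_mul (by positivity)]
  refine ENNReal.ofReal_le_ofReal ?_
  calc B * δ / (2 * (V + 1)) * (2 * T) * V = B * (δ * T) * (V / (V + 1)) := by field_simp
    _ ≤ B * (δ * T) :=
      mul_le_of_le_one_right (by positivity) ((div_le_one (by positivity)).mpr (by linarith))

end ZetaSupBound

section SelfApproximation

/-- The group of logarithms of positive rationals: the frequencies of the Dirichlet polynomials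
`τ ↦ zetaPartialSum N (s + iτ)` lie in it. -/
def logRat : AddSubgroup ℝ where
  carrier := {x | ∃ q : ℚ, 0 < q ∧ Real.log q = x}
  zero_mem' := ⟨1, one_pos, by simp⟩
  add_mem' := by
    rintro _ _ ⟨p, hp, rfl⟩ ⟨q, hq, rfl⟩
    refine ⟨p * q, mul_pos hp hq, ?_⟩
    rw [Rat.cast_mul, Real.log_mul (by exact_mod_cast hp.ne') (by exact_mod_cast hq.ne')]
  neg_mem' := by
    rintro _ ⟨p, hp, rfl⟩
    exact ⟨p⁻¹, inv_pos.mpr hp, by rw [Rat.cast_inv, Real.log_inv]⟩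

lemma log_natCast_mem_logRat {n : ℕ} (hn : n ≠ 0) : Real.log n ∈ logRat :=
  ⟨n, by positivity, by simp⟩

lemma countable_logRat : (logRat : Set ℝ).Countable :=
  (Set.countable_range fun q : ℚ => Real.log q).mono <| by
    rintro _ ⟨q, _, hq⟩
    exact ⟨q, hq⟩

lemma natCast_cpow_neg_add_mul_I {n : ℕ} (hn : n ≠ 0) (s : ℂ) (τ : ℝ) :
    (n : ℂ) ^ (-(s + τ * I)) = cexp (I * (-Real.log n : ℝ) * τ) * (n : ℂ) ^ (-s) := by
  have hn' : (n : ℂ) ≠ 0 := Nat.cast_ne_zero.mpr hn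
  rw [neg_add, cpow_add _ _ hn', mul_comm, cpow_def_of_ne_zero hn' (-(τ * I)), ← natCast_log]
  congr 2
  push_cast
  ring

lemma exists_mem_trigPoly_logRat_eq_zetaPartialSum (K : Set ℂ) [CompactSpace K] (N : ℕ) :
    ∃ P ∈ trigPoly logRat C(K, ℂ), ∀ (τ : ℝ) (s : K), P τ s = zetaPartialSum N (s + τ * I) := by
  have hcont (n : Finset.Icc 1 N) : Continuous fun s : K => (n : ℂ) ^ (-(s : ℂ)) :=
    continuous_subtype_val.neg.const_cpow (.inl (Nat.cast_ne_zero.mpr (by grind)))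
  refine ⟨∑ n : Finset.Icc 1 N, fun τ => cexp (I * (-Real.log n : ℝ) * τ) •
    (⟨_, hcont n⟩ : C(K, ℂ)), sum_mem fun n _ => cexp_smul_mem_trigPoly
      (neg_mem (log_natCast_mem_logRat (by grind))) _, fun τ s => ?_⟩
  rw [zetaPartialSum,
    ← Finset.sum_coe_sort (Finset.Icc 1 N) fun n => (n : ℂ) ^ (-((s : ℂ) + τ * I)),
    Finset.sum_apply, ContinuousMap.sum_apply]
  refine Finset.sum_congr rfl fun n _ => ?_
  have hn : (n : ℕ) ≠ 0 := by grind
  exact (natCast_cpow_neg_add_mul_I hn s τ).symm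

lemma enorm_eq_supNorm {K : Set ℂ} [CompactSpace K] {h : C(K, ℂ)} {f : ℂ → ℂ}
    (hf : ∀ s : K, h s = f s) : ‖h‖ₑ = supNorm K f := by
  rw [ContinuousMap.enorm_eq_iSup_enorm]
  simp only [hf]
  exact iSup_subtype

/-- The vertical translates of `ζ`, restricted to a compact set `K` of the strip, as a curve
`τ ↦ ζ(· + iτ)` in `C(K, ℂ)`. -/
noncomputable def zetaTranslate {K : Set ℂ} (hKs : K ⊆ strip) : C(ℝ, C(K, ℂ)) :=
  ContinuousMap.curry ⟨fun p : ℝ × K => riemannZeta (p.2 + p.1 * I), by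
    refine continuous_iff_continuousAt.mpr fun p => ?_
    have hne : (p.2 : ℂ) + p.1 * I ≠ 1 := fun h =>
      (hKs p.2.2).2.ne (by simpa using congrArg re h)
    exact ContinuousAt.comp (f := fun p : ℝ × K => (p.2 : ℂ) + p.1 * I)
      (differentiableAt_riemannZeta hne).continuousAt (by fun_prop)⟩

theorem isBesicovitchAP_zetaTranslate {K : Set ℂ} [CompactSpace K] (hKs : K ⊆ strip) :
    IsBesicovitchAP logRat (zetaTranslate hKs) where
  continuous := (zetaTranslate hKs).continuous
  exists_trigPoly δ hδ := by
    obtain ⟨N, hN⟩ := exists_eventually_lintegral_supNorm_zeta_sub_zetaPartialSum_le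
      (isCompact_iff_compactSpace.mpr ‹_›) hKs hδ
    obtain ⟨P, hP, hPN⟩ := exists_mem_trigPoly_logRat_eq_zetaPartialSum K N
    refine ⟨P, hP, ?_⟩
    filter_upwards [hN, eventually_ge_atTop 0] with T hT hT0
    have hcont : Continuous fun τ => zetaTranslate hKs τ - P τ :=
      (zetaTranslate hKs).continuous.sub (continuous_of_mem_trigPoly hP)
    rw [intervalIntegral.integral_of_le (by linarith),
      integral_norm_eq_lintegral_enorm hcont.aestronglyMeasurable]
    refine ENNReal.toReal_le_of_le_ofReal (by positivity) (le_of_eq_of_le ?_ hT)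
    exact lintegral_congr fun τ => enorm_eq_supNorm fun s =>
      congrArg (riemannZeta (s + τ * I) - ·) (hPN τ s)

theorem lowerDens_supNorm_zeta_dilate_sub_pos {d : ℝ}
    (hd : ∀ l ∈ logRat, ∀ m ∈ logRat, l + d * m = 0 → m = 0) {K : Set ℂ} (hK : IsCompact K)
    (hKs : K ⊆ strip) {ε : ℝ} (hε : 0 < ε) :
    0 < lowerDens {τ : ℝ | supNorm K (fun s => riemannZeta (s + (d * τ : ℝ) * I)
      - riemannZeta (s + τ * I)) < ENNReal.ofReal ε} := by
  have : CompactSpace K := isCompact_iff_compactSpace.mp hK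
  have hd0 : d ≠ 0 := by
    rintro rfl
    have := hd 0 (zero_mem _) (Real.log 2) (log_natCast_mem_logRat two_ne_zero) (by simp)
    exact (Real.log_pos one_lt_two).ne' this
  convert (isBesicovitchAP_zetaTranslate hKs).lowerDens_norm_sub_lt_pos hd0 hd hε using 4 with τ
  rw [← enorm_eq_supNorm (h := zetaTranslate hKs (d * τ) - zetaTranslate hKs τ) fun _ => rfl,
    ← ofReal_norm, ENNReal.ofReal_lt_ofReal_iff hε]

lemma eq_zero_of_add_mul_eq_zero_of_notMem {Λ : Set ℝ} {d : ℝ}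
    (hd : d ∉ Set.image2 (fun l m => -l / m) Λ Λ) :
    ∀ l ∈ Λ, ∀ m ∈ Λ, l + d * m = 0 → m = 0 := by
  intro l hl m hm h
  by_contra hm0
  exact hd ⟨l, hl, m, hm, by simp only; field_simp; linarith⟩

theorem self_approx_zeta_ae_general :
    ∃ S : Set ℝ, S.Countable ∧ ∀ d ∉ S,
      ∀ K : Set ℂ, IsCompact K → K ⊆ strip → ∀ ε : ℝ, 0 < ε →
        0 < lowerDens {τ : ℝ |
          supNorm K (fun s => riemannZeta (s + (d * τ : ℝ) * I)
            - riemannZeta (s + τ * I)) < ENNReal.ofReal ε} :=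
  ⟨_, countable_logRat.image2 countable_logRat _, fun _ hd _ hK hKs _ hε =>
    lowerDens_supNorm_zeta_dilate_sub_pos (eq_zero_of_add_mul_eq_zero_of_notMem hd) hK hKs hε⟩

end SelfApproximation

theorem self_approx_zeta_ae :
    ∀ᵐ d : ℝ ∂volume,
      ∀ K : Set ℂ, IsCompact K → K ⊆ strip → IsConnected Kᶜ → ∀ ε : ℝ, 0 < ε →
        0 < lowerDens {τ : ℝ |
          supNorm K (fun s => riemannZeta (s + (d * τ : ℝ) * Complex.I)
            - riemannZeta (s + τ * Complex.I)) < ENNReal.ofReal ε} := by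
  obtain ⟨S, hS, h⟩ := self_approx_zeta_ae_general
  filter_upwards [hS.ae_notMem volume] with d hd K hK hKs _ using h d hd K hK hKs
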